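/- arXiv:1804.05919 — 2 statements merged into one kernel-verified Lean document; each statement's English description precedes it below -/
import Mathlib

section
/- Let I ⊆ R and I' ⊆ R' be square-free monomial ideals in polynomial rings over the same field K, each with μ minimal generators and with separated hypergraphs on the common vertex set {1,…,μ}, such that H(I) = H(I') ∪ {F} where F = {i_1,…,i_r} and the singleton {i_j} belongs to H(I') for every 1 ≤ j ≤ r (i.e., every vertex of F is closed in H(I')). Then pd(R/I) = pd(R'/I'). -/
/-!
The positive-degree Betti numbers of `R/I` vanish or not according to the relation `lcm(t) ∣ lcm(s)`
between tuples `t`, `s` of generators, and this relation is the same for `I` and `I'`.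

For the first claim, `R/I` is resolved by the Taylor complex, in a version whose degree `i` part is free
on all `i`-tuples of generators and whose differential is the simplicial boundary with coefficients
`lcm(t) / lcm(s)`. Its exactness (`taylorD_exact`, `taylorAug_exact`) follows by splitting chains
according to monomials `x^a` and coning with a generator dividing `x^a`. By `isZero_tor_iff_exact`, the
module `Tor_{i+1}(R/I, K)` is zero exactly when the Taylor complex tensored with `K` is exact in degree
`i + 1`. Tensoring with `K` sends the coefficient `lcm(t) / lcm(s)` to `1` if `lcm(t) ∣ lcm(s)` and to `0`
otherwise (`wbd_eq_redD`), so the tensored complex `redD` involves no more than that relation.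

For the second claim, `lcm(t)` divides `lcm(s)` if and only if each edge of the hypergraph that meets `t`
also meets `s` (`lcmSupp_subset_iff`). For the additional edge `F`, this condition is implied by those for
the edges `{j}`, `j ∈ F`, which belong to `H(I')` (`lcmSupp_subset_congr`).

As the supremum defining the projective dimension does not depend on degree `0` (`sSup_le_of_succ`), the
two projective dimensions agree.
-/

open CategoryTheory

/-- The square-free monomial of `K[x₁,…,xₙ]` with support `m j`. -/
noncomputable def sqMonomial (K : Type) [Field K] {n μ : ℕ} (m : Fin μ → Finset (Fin n))
    (j : Fin μ) : MvPolynomial (Fin n) K := ∏ i ∈ m j, MvPolynomial.X i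

/-- The square-free monomial ideal of `K[x₁,…,xₙ]` generated by the square-free
monomials with supports `m j`, `j = 1,…,μ`. -/
noncomputable def sqIdeal (K : Type) [Field K] {n μ : ℕ} (m : Fin μ → Finset (Fin n)) :
    Ideal (MvPolynomial (Fin n) K) :=
  Ideal.span (Set.range (sqMonomial K m))

/-- The (dual) hypergraph attached to a family of square-free monomials of `K[x₁,…,xₙ]`
(encoded by their supports `m j ⊆ {x₁,…,xₙ}`): its edges are the nonempty sets
`{j : xᵢ divides m_j}`, `i = 1,…,n`. -/
def hgEdges {n μ : ℕ} (m : Fin μ → Finset (Fin n)) : Set (Finset (Fin μ)) :=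
  {F | F.Nonempty ∧ ∃ i : Fin n, F = Finset.univ.filter (fun j => i ∈ m j)}

/-- The `i`-th total Betti number `βᵢ(R/I) = dim_K Torᵢ^R(R/I, K)` of `R/I`, where
`R = K[x₁,…,xₙ]`, `K` is an `R`-module via evaluation of polynomials at `0`, and the
`K`-vector space structure on the Tor module is by restriction of scalars along
`K → R`. -/
noncomputable def bettiNumber (K : Type) [Field K] {n : ℕ}
    (I : Ideal (MvPolynomial (Fin n) K)) (i : ℕ) : Cardinal := by
  letI : Module (MvPolynomial (Fin n) K) K :=
    Module.compHom K (MvPolynomial.aeval (fun _ : Fin n => (0 : K))).toRingHom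
  let M := ((Tor (ModuleCat (MvPolynomial (Fin n) K)) i).obj
      (ModuleCat.of _ ((MvPolynomial (Fin n) K) ⧸ I))).obj (ModuleCat.of _ K)
  letI : Module K M := Module.compHom M (MvPolynomial.C : K →+* MvPolynomial (Fin n) K)
  exact Module.rank K M

/-- The projective dimension `pd(R/I) = max {i : βᵢ(R/I) ≠ 0}` of `R/I` as an
`R`-module, `R = K[x₁,…,xₙ]`. -/
noncomputable def pdim (K : Type) [Field K] {n : ℕ}
    (I : Ideal (MvPolynomial (Fin n) K)) : ℕ :=
  sSup {i : ℕ | bettiNumber K I i ≠ 0}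

/-- A hypergraph on vertex set `{1,…,μ}` is separated if for every pair `j₁ < j₂` there
are edges `F₁, F₂` with `j₁ ∈ F₁ ∖ F₂` and `j₂ ∈ F₂ ∖ F₁`. -/
def SeparatedHG {n μ : ℕ} (m : Fin μ → Finset (Fin n)) : Prop :=
  ∀ j₁ j₂ : Fin μ, j₁ < j₂ →
    ∃ F₁ ∈ hgEdges m, ∃ F₂ ∈ hgEdges m, j₁ ∈ F₁ ∧ j₁ ∉ F₂ ∧ j₂ ∈ F₂ ∧ j₂ ∉ F₁

/-! ### Tor from a flat resolution of the first argument -/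

section TorShift
open MonoidalCategory Limits
universe u
variable {R : Type u} [CommRing R]

/-- The complex `X ⊗ P` for a projective resolution `P`; its homology is `Tor(X, Y)`, Mathlib's
`Tor` being the left derived functor in the second argument. -/
noncomputable abbrev tensorCx (X : ModuleCat.{u} R) {Y : ModuleCat.{u} R}
    (P : ProjectiveResolution Y) : ChainComplex (ModuleCat.{u} R) ℕ :=
  (((tensoringLeft (ModuleCat.{u} R)).obj X).mapHomologicalComplex _).obj P.complex

lemma isZero_tor_iff (X : ModuleCat.{u} R) {Y : ModuleCat.{u} R}
    (P : ProjectiveResolution Y) (i : ℕ) :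
    IsZero (((Tor (ModuleCat.{u} R) i).obj X).obj Y) ↔ IsZero ((tensorCx X P).homology i) :=
  (P.isoLeftDerivedObj ((tensoringLeft (ModuleCat.{u} R)).obj X) i).isZero_iff

lemma isZero_homology_flat (X : ModuleCat.{u} R) [Module.Flat R X] {Y : ModuleCat.{u} R}
    (P : ProjectiveResolution Y) (i : ℕ) : IsZero ((tensorCx X P).homology (i + 1)) := by
  rw [← HomologicalComplex.exactAt_iff_isZero_homology]
  have h := P.complex_exactAt_succ i
  rw [HomologicalComplex.exactAt_iff' _ (i + 2) (i + 1) i (by simp) (by simp)] at h ⊢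
  have hF : PreservesFiniteLimits ((tensoringLeft (ModuleCat.{u} R)).obj X) :=
    inferInstanceAs (PreservesFiniteLimits (tensorLeft X))
  have hG : PreservesFiniteColimits ((tensoringLeft (ModuleCat.{u} R)).obj X) :=
    inferInstanceAs (PreservesFiniteColimits (tensorLeft X))
  exact h.map ((tensoringLeft (ModuleCat.{u} R)).obj X)

/-- The sequence of complexes `S.X₁ ⊗ P ⟶ S.X₂ ⊗ P ⟶ S.X₃ ⊗ P`. -/
noncomputable abbrev tensorSeq (S : ShortComplex (ModuleCat.{u} R)) {Y : ModuleCat.{u} R}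
    (P : ProjectiveResolution Y) : ShortComplex (ChainComplex (ModuleCat.{u} R) ℕ) :=
  ShortComplex.mk
    ((NatTrans.mapHomologicalComplex ((tensoringLeft (ModuleCat.{u} R)).map S.f) _).app P.complex)
    ((NatTrans.mapHomologicalComplex ((tensoringLeft (ModuleCat.{u} R)).map S.g) _).app P.complex)
    (by
      ext i : 1
      change S.f ▷ P.complex.X i ≫ S.g ▷ P.complex.X i = 0
      rw [← comp_whiskerRight, S.zero, MonoidalPreadditive.zero_whiskerRight])

lemma tensorSeq_shortExact {S : ShortComplex (ModuleCat.{u} R)} (hS : S.ShortExact)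
    {Y : ModuleCat.{u} R} (P : ProjectiveResolution Y) : (tensorSeq S P).ShortExact := by
  apply HomologicalComplex.shortExact_of_degreewise_shortExact
  intro i
  have : Module.Flat R (P.complex.X i) := by
    have : Module.Projective R (P.complex.X i) :=
      (IsProjective.iff_projective _).2 (P.projective i)
    infer_instance
  exact hS.map_of_exact (tensorRight (P.complex.X i))

/-- Dimension shifting along `0 → X₁ → X₂ → X₃ → 0` with `X₂` flat, in degrees at least `2`. -/
lemma isZero_tor_shift {S : ShortComplex (ModuleCat.{u} R)} (hS : S.ShortExact)
    [Module.Flat R S.X₂] (Y : ModuleCat.{u} R) (i : ℕ) :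
    IsZero (((Tor (ModuleCat.{u} R) (i + 2)).obj S.X₃).obj Y) ↔
      IsZero (((Tor (ModuleCat.{u} R) (i + 1)).obj S.X₁).obj Y) := by
  let P := projectiveResolution Y
  rw [isZero_tor_iff _ P, isZero_tor_iff _ P]
  exact ((tensorSeq_shortExact hS P).δIso (i + 2) (i + 1) rfl
    (isZero_homology_flat S.X₂ P _) (isZero_homology_flat S.X₂ P _)).isZero_iff

/-- The bottom case of dimension shifting: `Tor₁(X₃, Y)` is the kernel of `X₁ ⊗ Y → X₂ ⊗ Y`. -/
lemma isZero_tor_one {S : ShortComplex (ModuleCat.{u} R)} (hS : S.ShortExact)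
    [Module.Flat R S.X₂] (Y : ModuleCat.{u} R) :
    IsZero (((Tor (ModuleCat.{u} R) 1).obj S.X₃).obj Y) ↔ Mono (S.f ▷ Y) := by
  let P := projectiveResolution Y
  have hT := tensorSeq_shortExact hS P
  have := hT.mono_δ 1 0 rfl (isZero_homology_flat S.X₂ P _)
  have h1 := hT.homology_exact₁ 1 0 rfl
  rw [isZero_tor_iff _ P]
  -- The degree-zero homology of `X ⊗ P` is `X ⊗ Y`, naturally in `X`.
  have key : Mono (HomologicalComplex.homologyMap (tensorSeq S P).f 0) ↔ Mono (S.f ▷ Y) := by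
    let F := (tensoringLeft (ModuleCat.{u} R)).obj S.X₁
    let G := (tensoringLeft (ModuleCat.{u} R)).obj S.X₂
    have : PreservesFiniteColimits F := inferInstanceAs (PreservesFiniteColimits (tensorLeft S.X₁))
    have : PreservesFiniteColimits G := inferInstanceAs (PreservesFiniteColimits (tensorLeft S.X₂))
    have sq : HomologicalComplex.homologyMap (tensorSeq S P).f 0 ≫
          ((ChainComplex.isoHomologyι₀ _) ≪≫ asIso (P.fromLeftDerivedZero' G)).hom =
        ((ChainComplex.isoHomologyι₀ _) ≪≫ asIso (P.fromLeftDerivedZero' F)).hom ≫ S.f ▷ Y := by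
      have : HomologicalComplex.opcyclesMap (tensorSeq S P).f 0 ≫ P.fromLeftDerivedZero' G =
          P.fromLeftDerivedZero' F ≫ S.f ▷ Y := by
        rw [← cancel_epi (HomologicalComplex.pOpcycles _ _),
          HomologicalComplex.p_opcyclesMap_assoc,
          ProjectiveResolution.pOpcycles_comp_fromLeftDerivedZero',
          ProjectiveResolution.pOpcycles_comp_fromLeftDerivedZero'_assoc]
        exact ((tensoringLeft (ModuleCat.{u} R)).map S.f).naturality (P.π.f 0) |>.symm
      simp only [Iso.trans_hom, asIso_hom, HomologicalComplex.isoHomologyι_hom, Category.assoc,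
        ← this]
      exact HomologicalComplex.homologyι_naturality_assoc (tensorSeq S P).f 0 _
    exact (MorphismProperty.monomorphisms _).arrow_mk_iso_iff (Arrow.isoMk _ _ sq.symm)
  rw [← key]
  constructor
  · intro h
    exact h1.mono_g (h.eq_of_src _ _)
  · intro h
    have h0 : hT.δ 1 0 rfl = 0 := by
      rw [← cancel_mono (HomologicalComplex.homologyMap (tensorSeq S P).f 0), zero_comp]
      exact hT.δ_comp _ _ _
    exact IsZero.of_mono_eq_zero _ h0

/-- In an exact sequence `T₂ → T₁ → T₀ → M`, the map `T₁ → T₀` corestricts to a surjection onto the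
first syzygy `ker ε`, still exact at `T₁`. -/
lemma exists_lift_ker {T₂ T₁ T₀ M : Type u} [AddCommGroup T₂] [AddCommGroup T₁] [AddCommGroup T₀]
    [AddCommGroup M] [Module R T₂] [Module R T₁] [Module R T₀] [Module R M]
    {f : T₂ →ₗ[R] T₁} {g : T₁ →ₗ[R] T₀} {ε : T₀ →ₗ[R] M}
    (hfg : Function.Exact f g) (hg : Function.Exact g ε) :
    ∃ g' : T₁ →ₗ[R] LinearMap.ker ε, (LinearMap.ker ε).subtype ∘ₗ g' = g ∧
      Function.Exact f g' ∧ Function.Surjective g' := by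
  refine ⟨g.codRestrict _ fun x => hg.apply_apply_eq_zero x, rfl, fun x => ?_, ?_⟩
  · rw [← hfg x]
    exact Subtype.ext_iff
  · rintro ⟨y, hy⟩
    obtain ⟨x, hx⟩ := (hg y).1 hy
    exact ⟨x, Subtype.ext hx⟩

lemma shortExact_ker {T M : Type u} [AddCommGroup T] [AddCommGroup M] [Module R T] [Module R M]
    {ε : T →ₗ[R] M} (hs : Function.Surjective ε) :
    (ModuleCat.shortComplexOfCompEqZero (LinearMap.ker ε).subtype ε
      (by ext x; simp)).ShortExact :=
  ModuleCat.shortComplex_shortExact _ (LinearMap.exact_subtype_ker_map ε)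
    (Submodule.injective_subtype _) hs

/-- If `⋯ → T 1 → T 0 → M → 0` is an exact sequence with all `T i` flat, then `Tor_{i+1}(M, N)`
vanishes exactly when `T • ⊗ N` is exact at `T (i + 1) ⊗ N`. The induction on `i` replaces `M` by its
first syzygy; it is needed because Mathlib's `Tor` resolves the second argument, while `T` resolves
the first. -/
lemma isZero_tor_iff_exact {N : Type u} [AddCommGroup N] [Module R N] (i : ℕ) :
    ∀ (T : ℕ → Type u) [∀ n, AddCommGroup (T n)] [∀ n, Module R (T n)]
      [∀ n, Module.Flat R (T n)] (D : ∀ n, T (n + 1) →ₗ[R] T n)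
      (_ : ∀ n, Function.Exact (D (n + 1)) (D n))
      (M : Type u) [AddCommGroup M] [Module R M] (ε : T 0 →ₗ[R] M)
      (_ : Function.Exact (D 0) ε) (_ : Function.Surjective ε),
    IsZero (((Tor (ModuleCat.{u} R) (i + 1)).obj (ModuleCat.of R M)).obj (ModuleCat.of R N)) ↔
      Function.Exact ((D (i + 1)).rTensor N) ((D i).rTensor N) := by
  induction i with
  | zero =>
    intro T _ _ _ D hD M _ _ ε hε hs
    have : Module.Flat R (ModuleCat.of R (T 0)) := inferInstanceAs (Module.Flat R (T 0))
    refine (isZero_tor_one (shortExact_ker hs) (ModuleCat.of R N)).trans ?_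
    rw [ModuleCat.mono_iff_injective]
    change Function.Injective ((LinearMap.ker ε).subtype.rTensor N) ↔ _
    obtain ⟨D', hfac, hex, hD'⟩ := exists_lift_ker (hD 0) hε
    have hexN := rTensor_exact N hex hD'
    rw [← hfac, LinearMap.rTensor_comp]
    constructor
    · intro hinj x
      rw [← hexN x, LinearMap.comp_apply, map_eq_zero_iff _ hinj]
    · intro h
      rw [injective_iff_map_eq_zero]
      intro z hz
      obtain ⟨x, rfl⟩ := LinearMap.rTensor_surjective N hD' z
      exact (hexN x).2 ((h x).1 hz)
  | succ i ih =>
    intro T _ _ _ D hD M _ _ ε hε hs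
    have : Module.Flat R (ModuleCat.of R (T 0)) := inferInstanceAs (Module.Flat R (T 0))
    refine (isZero_tor_shift (shortExact_ker hs) (ModuleCat.of R N) i).trans ?_
    obtain ⟨D', -, hex, hD'⟩ := exists_lift_ker (hD 0) hε
    exact ih (fun n => T (n + 1)) (fun n => D (n + 1)) (fun n => hD (n + 1))
      (LinearMap.ker ε) D' hex hD'
end TorShift

/-! ### Weighted boundary maps on tuples of vertices -/

section Simplicial
open Matrix
variable {V : Type}

/-- The simplicial boundary of an ordered tuple of `n + 1` vertices, repetitions allowed, as an
integer combination of `n`-tuples. It is given by the recursion `∂(v, t) = t - v * ∂t`; the empty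
tuple is the generator in degree `0`, so the complex is augmented. -/
noncomputable def bd : (n : ℕ) → (Fin (n + 1) → V) → ((Fin n → V) →₀ ℤ)
  | 0, _ => Finsupp.single ![] 1
  | n + 1, t => Finsupp.single (vecTail t) 1 -
      Finsupp.mapDomain (vecCons (vecHead t)) (bd n (vecTail t))

lemma range_subset_of_mem_bd (n : ℕ) (t : Fin (n + 1) → V) (s : Fin n → V)
    (h : s ∈ (bd n t).support) : Set.range s ⊆ Set.range t := by
  classical
  induction n with
  | zero => rintro _ ⟨k, _⟩; exact k.elim0
  | succ n ih =>
    rw [bd] at h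
    rcases Finset.mem_union.1 (Finsupp.support_sub h) with h | h
    · obtain rfl : s = vecTail t := by simpa using Finsupp.support_single_subset h
      rintro _ ⟨k, rfl⟩
      exact ⟨k.succ, rfl⟩
    · obtain ⟨s', hs', rfl⟩ := Finset.mem_image.1 (Finsupp.mapDomain_support h)
      rintro _ ⟨k, rfl⟩
      refine Fin.cases ⟨0, rfl⟩ (fun k => ?_) k
      obtain ⟨l, hl⟩ := ih _ _ hs' ⟨k, rfl⟩
      exact ⟨l.succ, by simpa [vecTail] using hl⟩

/-- The boundary map on chains with coefficients in the `S`-module `N` whose coefficient from `t`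
to `s` is the simplicial one multiplied by the weight `w n t s ∈ S`. -/
noncomputable def wbd {S : Type*} (N : Type*) [CommRing S] [AddCommGroup N] [Module S N]
    (w : ∀ n, (Fin (n + 1) → V) → (Fin n → V) → S) (n : ℕ) :
    ((Fin (n + 1) → V) →₀ N) →ₗ[S] ((Fin n → V) →₀ N) :=
  Finsupp.lsum ℕ fun t => (bd n t).sum fun s c =>
    c • (Finsupp.lsingle s ∘ₗ LinearMap.lsmul S N (w n t s))

lemma wbd_single {S N : Type*} [CommRing S] [AddCommGroup N] [Module S N]
    (w : ∀ n, (Fin (n + 1) → V) → (Fin n → V) → S) (n : ℕ) (t : Fin (n + 1) → V) (x : N) :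
    wbd N w n (Finsupp.single t x) =
      (bd n t).sum fun s c => Finsupp.single s (c • w n t s • x) := by
  rw [wbd, Finsupp.lsum_single]
  simp [Finsupp.sum]

/-- Tensoring the weighted boundary maps over `S` with `N` gives the ones with coefficients in
`N`. -/
lemma exact_wbd_rTensor_iff {S N : Type*} [CommRing S] [AddCommGroup N] [Module S N]
    (w : ∀ n, (Fin (n + 1) → V) → (Fin n → V) → S) (n : ℕ) :
    Function.Exact ((wbd S w (n + 1)).rTensor N) ((wbd S w n).rTensor N) ↔
      Function.Exact (wbd N w (n + 1)) (wbd N w n) := by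
  classical
  have sq (n : ℕ) : (wbd S w n).rTensor N ∘ₗ
      (TensorProduct.finsuppScalarLeft S N (Fin (n + 1) → V)).symm.toLinearMap =
        (TensorProduct.finsuppScalarLeft S N (Fin n → V)).symm.toLinearMap ∘ₗ wbd N w n := by
    ext t x : 2
    simp only [LinearMap.comp_apply, Finsupp.lsingle_apply, LinearEquiv.coe_coe,
      LinearMap.rTensor_tmul, TensorProduct.finsuppScalarLeft_symm_apply_single, wbd_single,
      Finsupp.sum, TensorProduct.sum_tmul, map_sum]
    refine Finset.sum_congr rfl fun s _ => ?_
    rw [← Finsupp.smul_single, ← Finsupp.smul_single, TensorProduct.smul_tmul,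
      TensorProduct.smul_tmul, smul_comm]
  exact Function.Exact.iff_of_ladder_linearEquiv (sq (n + 1)) (sq n)

/-- The boundary map with all weights equal to `1`, coefficients in an abelian group. -/
noncomputable abbrev ubd (V : Type) (A : Type*) [AddCommGroup A] (n : ℕ) :
    ((Fin (n + 1) → V) →₀ A) →ₗ[ℤ] ((Fin n → V) →₀ A) := wbd A (fun _ _ _ => (1 : ℤ)) n

variable {A : Type*} [AddCommGroup A]

lemma ubd_single (n : ℕ) (t : Fin (n + 1) → V) (x : A) :
    ubd V A n (Finsupp.single t x) = (bd n t).sum fun s c => Finsupp.single s (c • x) := by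
  simp [ubd, wbd_single]

lemma ubd_mapRange (n : ℕ) (φ : A →+ A) (f : (Fin (n + 1) → V) →₀ A) :
    ubd V A n (Finsupp.mapRange.addMonoidHom φ f) = Finsupp.mapRange.addMonoidHom φ (ubd V A n f) := by
  induction f using Finsupp.induction_linear with
  | zero => simp
  | add f g hf hg => simp only [map_add, hf, hg]
  | single t x => simp [ubd_single, Finsupp.sum]

lemma ubd_zero_cons (j : V) (f : (Fin 0 → V) →₀ A) :
    ubd V A 0 (Finsupp.mapDomain (vecCons j) f) = f := by
  induction f using Finsupp.induction_linear with
  | zero => simp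
  | add f g hf hg => simp only [map_add, Finsupp.mapDomain_add, hf, hg]
  | single t x =>
    rw [Finsupp.mapDomain_single, ubd_single, bd, Finsupp.sum_single_index (by simp)]
    simp [Subsingleton.elim t ![]]

/-- Coning with the vertex `j` is a contracting homotopy of the unweighted complex. -/
lemma ubd_succ_cons (n : ℕ) (j : V) (f : (Fin (n + 1) → V) →₀ A) :
    ubd V A (n + 1) (Finsupp.mapDomain (vecCons j) f) =
      f - Finsupp.mapDomain (vecCons j) (ubd V A n f) := by
  induction f using Finsupp.induction_linear with
  | zero => simp
  | add f g hf hg => simp only [map_add, Finsupp.mapDomain_add, hf, hg]; abel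
  | single t x =>
    rw [Finsupp.mapDomain_single, ubd_single, ubd_single, bd, Finsupp.sum_sub_index,
      Finsupp.sum_single_index (by simp), Finsupp.sum_mapDomain_index (by simp)]
    · simp [Finsupp.sum, Finsupp.mapDomain_finsetSum, Finsupp.mapDomain_single]
    · intro s a b; simp [add_smul]
    · intro s a b; simp [sub_smul]

lemma ubd_ubd (n : ℕ) (f : (Fin (n + 2) → V) →₀ A) : ubd V A n (ubd V A (n + 1) f) = 0 := by
  induction f using Finsupp.induction_linear with
  | zero => simp
  | add f g hf hg => simp only [map_add, hf, hg, add_zero]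
  | single t x =>
    induction n with
    | zero =>
      rw [← cons_head_tail t, ← Finsupp.mapDomain_single, ubd_succ_cons, map_sub, ubd_zero_cons, sub_self]
    | succ n ih =>
      rw [← cons_head_tail t, ← Finsupp.mapDomain_single, ubd_succ_cons, map_sub, ubd_succ_cons,
        ih, Finsupp.mapDomain_zero, sub_zero, sub_self]
end Simplicial

/-! ### The Taylor complex on ordered tuples of generators -/

section Taylor
open MvPolynomial Matrix

variable (K : Type) [Field K] {n μ : ℕ}

/-- The square-free monomial with support `σ`. -/
noncomputable def mon (σ : Finset (Fin n)) : MvPolynomial (Fin n) K := ∏ v ∈ σ, X v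

lemma mon_eq_monomial (σ : Finset (Fin n)) :
    mon K σ = monomial (∑ v ∈ σ, Finsupp.single v 1) (1 : K) := by
  rw [monomial_sum_one]; rfl

lemma indicator_le_iff (σ : Finset (Fin n)) (a : Fin n →₀ ℕ) :
    (∑ v ∈ σ, Finsupp.single v 1 ≤ a) ↔ σ ⊆ a.support := by
  rw [Finsupp.le_def]
  simp only [Finsupp.finsetSum_apply, Finsupp.single_apply, Finset.sum_ite_eq', Finset.subset_iff,
    Finsupp.mem_support_iff]
  refine forall_congr' fun v => ?_
  split_ifs with h <;> simp [h, Nat.one_le_iff_ne_zero]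

lemma mon_dvd_iff (σ : Finset (Fin n)) (r : MvPolynomial (Fin n) K) :
    mon K σ ∣ r ↔ ∀ a, coeff a r ≠ 0 → σ ⊆ a.support := by
  rw [← Ideal.mem_span_singleton, mon_eq_monomial]
  have := mem_ideal_span_monomial_image (R := K) (x := r) (s := {∑ v ∈ σ, Finsupp.single v 1})
  simpa [indicator_le_iff] using this

lemma mem_sqIdeal_iff (m : Fin μ → Finset (Fin n)) (r : MvPolynomial (Fin n) K) :
    r ∈ sqIdeal K m ↔ ∀ a, coeff a r ≠ 0 → ∃ j, m j ⊆ a.support := by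
  have := mem_ideal_span_monomial_image (R := K) (x := r)
    (s := Set.range fun j => ∑ v ∈ m j, Finsupp.single v 1)
  rw [← Set.range_comp] at this
  have h : sqMonomial K m = (fun s => monomial s (1 : K)) ∘
      fun j => ∑ v ∈ m j, Finsupp.single v 1 := funext fun j => mon_eq_monomial K (m j)
  rw [sqIdeal, h, this]
  simp [indicator_le_iff]

/-- The additive projection of a polynomial onto the span of the monomials whose exponents
satisfy `p`. -/
noncomputable def restr (p : (Fin n →₀ ℕ) → Prop) :
    MvPolynomial (Fin n) K →+ MvPolynomial (Fin n) K := by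
  classical
  refine AddMonoidHom.mk' (fun r => ∑ a ∈ r.support with p a, monomial a (coeff a r)) ?_
  have h (r : MvPolynomial (Fin n) K) (b : Fin n →₀ ℕ) :
      coeff b (∑ a ∈ r.support with p a, monomial a (coeff a r)) = if p b then coeff b r else 0 := by
    simp only [coeff_sum, coeff_monomial, Finset.sum_ite_eq', Finset.mem_filter, mem_support_iff]
    by_cases hb : coeff b r = 0 <;> simp [hb]
  intro r s
  ext b
  rw [coeff_add, h, h, h, coeff_add]
  split_ifs <;> simp

open Classical in
lemma coeff_restr (p : (Fin n →₀ ℕ) → Prop) (r : MvPolynomial (Fin n) K) (b : Fin n →₀ ℕ) :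
    coeff b (restr K p r) = if p b then coeff b r else 0 := by
  by_cases hb : coeff b r = 0 <;> simp [restr, coeff_sum, coeff_monomial, hb]

variable (m : Fin μ → Finset (Fin n))

/-- The support of the least common multiple of the generators listed in the tuple `t`. -/
def lcmSupp {i : ℕ} (t : Fin i → Fin μ) : Finset (Fin n) := Finset.univ.biUnion fun k => m (t k)

lemma lcmSupp_mono {i l : ℕ} {t : Fin i → Fin μ} {s : Fin l → Fin μ}
    (h : Set.range s ⊆ Set.range t) : lcmSupp m s ⊆ lcmSupp m t := by
  intro v hv
  simp only [lcmSupp, Finset.mem_biUnion, Finset.mem_univ, true_and] at hv ⊢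
  obtain ⟨k, hk⟩ := hv
  obtain ⟨l, hl⟩ := h ⟨k, rfl⟩
  exact ⟨l, hl ▸ hk⟩

lemma lcmSupp_cons {i : ℕ} (j : Fin μ) (t : Fin i → Fin μ) :
    lcmSupp m (vecCons j t) = m j ∪ lcmSupp m t := by
  ext v
  simp [lcmSupp, Fin.exists_fin_succ]

/-- The quotient `lcm(t) / lcm(s)`. The set difference is the right support when the generators
listed in `s` are among those in `t`, which is the case for all `s` occurring in the boundary of `t`. -/
noncomputable def taylorWeight (i : ℕ) (t : Fin (i + 1) → Fin μ) (s : Fin i → Fin μ) :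
    MvPolynomial (Fin n) K := mon K (lcmSupp m t \ lcmSupp m s)

/-- The differential of the Taylor complex, from tuples of length `i + 1` to tuples of length `i`.
Unlike in the usual Taylor resolution, the tuples are neither ordered increasingly nor free of
repetitions. -/
noncomputable abbrev taylorD (i : ℕ) := wbd (MvPolynomial (Fin n) K) (taylorWeight K m) i

/-- The map `e_t ↦ lcm(t) e_t`. It carries the Taylor complex onto the subcomplex of the unweighted
complex formed by the chains whose coefficient at each `t` is divisible by `lcm(t)`. -/
noncomputable def clearDen (i : ℕ) :
    ((Fin i → Fin μ) →₀ MvPolynomial (Fin n) K) →ₗ[MvPolynomial (Fin n) K]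
      ((Fin i → Fin μ) →₀ MvPolynomial (Fin n) K) :=
  Finsupp.lsum ℕ fun t => Finsupp.lsingle t ∘ₗ LinearMap.lsmul _ _ (mon K (lcmSupp m t))

lemma clearDen_single (i : ℕ) (t : Fin i → Fin μ) (r : MvPolynomial (Fin n) K) :
    clearDen K m i (Finsupp.single t r) = Finsupp.single t (mon K (lcmSupp m t) * r) := by
  rw [clearDen, Finsupp.lsum_single]; rfl

lemma clearDen_apply (i : ℕ) (f : (Fin i → Fin μ) →₀ MvPolynomial (Fin n) K) (t : Fin i → Fin μ) :
    clearDen K m i f t = mon K (lcmSupp m t) * f t := by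
  induction f using Finsupp.induction_linear with
  | zero => simp
  | add f g hf hg => simp only [map_add, Finsupp.add_apply, hf, hg, mul_add]
  | single s x =>
    rw [clearDen_single]
    by_cases h : s = t
    · subst h; simp
    · simp [h]

lemma mon_ne_zero (σ : Finset (Fin n)) : mon K σ ≠ 0 :=
  Finset.prod_ne_zero_iff.2 fun v _ => X_ne_zero v

lemma clearDen_injective (i : ℕ) : Function.Injective (clearDen K m i) := by
  rw [injective_iff_map_eq_zero]
  intro f hf
  ext1 t
  have := DFunLike.congr_fun hf t
  rw [clearDen_apply] at this
  exact (mul_eq_zero.1 this).resolve_left (mon_ne_zero K _)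

lemma exists_clearDen_eq (i : ℕ) (g : (Fin i → Fin μ) →₀ MvPolynomial (Fin n) K)
    (hg : ∀ t, mon K (lcmSupp m t) ∣ g t) : ∃ f, clearDen K m i f = g := by
  choose q hq using hg
  refine ⟨Finsupp.equivFunOnFinite.symm q, ?_⟩
  ext1 t
  rw [clearDen_apply, hq]; rfl

lemma clearDen_taylorD (i : ℕ) (f : (Fin (i + 1) → Fin μ) →₀ MvPolynomial (Fin n) K) :
    clearDen K m i (taylorD K m i f) = ubd (Fin μ) _ i (clearDen K m (i + 1) f) := by
  induction f using Finsupp.induction_linear with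
  | zero => simp
  | add f g hf hg => simp only [map_add, hf, hg]
  | single t x =>
    rw [clearDen_single, ubd_single, taylorD, wbd_single, Finsupp.sum, Finsupp.sum, map_sum]
    refine Finset.sum_congr rfl fun s hs => ?_
    rw [clearDen_single, mul_smul_comm, taylorWeight, smul_eq_mul, ← mul_assoc]
    congr 3
    rw [mul_comm]
    exact Finset.prod_sdiff (lcmSupp_mono m (range_subset_of_mem_bd i t s hs))

/-- The Taylor complex is exact in positive degrees. After multiplying each `e_t` by `lcm(t)` and
splitting a cycle by monomials, the part of exponent `a` involves only generators dividing `x^a`; coning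
with any one such generator contracts it without leaving the subcomplex. -/
lemma taylorD_exact (i : ℕ) : Function.Exact (taylorD K m (i + 1)) (taylorD K m i) := by
  classical
  intro f
  constructor
  · intro hf
    have hd : ubd (Fin μ) _ i (clearDen K m (i + 1) f) = 0 := by
      rw [← clearDen_taylorD, hf, map_zero]
    -- For each exponent, `sel` picks a generator dividing the corresponding monomial, if there is one.
    obtain ⟨sel, hsel⟩ : ∃ sel : (Fin n →₀ ℕ) → Option (Fin μ),
        ∀ a, (∀ j, sel a = some j → m j ⊆ a.support) ∧
          ((∃ j, m j ⊆ a.support) → ∃ j, sel a = some j) := by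
      refine ⟨fun a => if h : ∃ j, m j ⊆ a.support then some h.choose else none, fun a => ?_⟩
      by_cases h : ∃ j, m j ⊆ a.support
      · simp only [h, dif_pos]
        refine ⟨fun j hj => ?_, fun _ => ⟨_, rfl⟩⟩
        obtain rfl := Option.some.inj hj
        exact h.choose_spec
      · simp [h]
    set g := clearDen K m (i + 1) f with hg
    let π (j : Fin μ) := restr K (n := n) fun a => sel a = some j
    let gj (j : Fin μ) := Finsupp.mapRange.addMonoidHom (π j) g
    -- The component `gj j` collects the monomials of `g` whose selected generator is `j`.
    have hsum : ∑ j, gj j = g := by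
      ext t a
      simp only [Finsupp.finsetSum_apply, coeff_sum, gj, Finsupp.mapRange.addMonoidHom_apply,
        Finsupp.mapRange_apply, π, coeff_restr]
      by_cases h0 : coeff a (g t) = 0
      · simp [h0]
      · have hdvd : mon K (lcmSupp m t) ∣ g t := by
          rw [hg, clearDen_apply]; exact dvd_mul_right _ _
        have h1 := (mon_dvd_iff K _ _).1 hdvd a h0
        have h2 : m (t 0) ⊆ lcmSupp m t :=
          Finset.subset_biUnion_of_mem (fun k => m (t k)) (Finset.mem_univ 0)
        obtain ⟨j, hj⟩ := (hsel a).2 ⟨t 0, h2.trans h1⟩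
        simp [hj]
    -- The sum of the cones `j * gj j` still has its coefficients divisible by the relevant `lcm`.
    have hH : ∀ u, mon K (lcmSupp m u) ∣ (∑ j, Finsupp.mapDomain (vecCons j) (gj j)) u := by
      intro u
      rw [Finsupp.finsetSum_apply]
      refine Finset.dvd_sum fun j _ => ?_
      by_cases hu : u ∈ Set.range (vecCons j : (Fin (i + 1) → Fin μ) → _)
      · obtain ⟨t, rfl⟩ := hu
        rw [Finsupp.mapDomain_apply (fun a b h => (vecCons_inj.1 h).2), mon_dvd_iff]
        intro a ha
        simp only [gj, Finsupp.mapRange.addMonoidHom_apply, Finsupp.mapRange_apply, π,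
          coeff_restr, ne_eq, ite_eq_right_iff, Classical.not_imp] at ha
        have hdvd : mon K (lcmSupp m t) ∣ g t := by
          rw [hg, clearDen_apply]; exact dvd_mul_right _ _
        rw [lcmSupp_cons]
        exact Finset.union_subset ((hsel a).1 j ha.1) ((mon_dvd_iff K _ _).1 hdvd a ha.2)
      · rw [Finsupp.mapDomain_of_notMem_range _ _ hu]
        exact dvd_zero _
    obtain ⟨F, hF⟩ := exists_clearDen_eq K m (i + 2) _ hH
    refine ⟨F, clearDen_injective K m (i + 1) ?_⟩
    rw [clearDen_taylorD, hF, map_sum]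
    simp only [ubd_succ_cons, gj, ubd_mapRange, hd, map_zero, Finsupp.mapDomain_zero, sub_zero]
    exact hsum
  · rintro ⟨f, rfl⟩
    apply clearDen_injective K m i
    rw [clearDen_taylorD, clearDen_taylorD, ubd_ubd, map_zero]

/-- The augmentation of the Taylor complex: `T 0` is free on the empty tuple, and it maps onto
`R/I`. -/
noncomputable def taylorAug : ((Fin 0 → Fin μ) →₀ MvPolynomial (Fin n) K) →ₗ[MvPolynomial (Fin n) K]
    MvPolynomial (Fin n) K ⧸ sqIdeal K m :=
  (sqIdeal K m).mkQ ∘ₗ Finsupp.lapply ![]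

lemma taylorAug_surjective : Function.Surjective (taylorAug K m) := by
  intro y
  obtain ⟨r, rfl⟩ := (sqIdeal K m).mkQ_surjective y
  exact ⟨Finsupp.single ![] r, by simp [taylorAug]⟩

lemma taylorD_zero_single (t : Fin 1 → Fin μ) (x : MvPolynomial (Fin n) K) :
    taylorD K m 0 (Finsupp.single t x) = Finsupp.single ![] (sqMonomial K m (t 0) * x) := by
  rw [taylorD, wbd_single, bd, Finsupp.sum_single_index (by simp)]
  simp [taylorWeight, lcmSupp, mon, sqMonomial]

lemma taylorAug_exact : Function.Exact (taylorD K m 0) (taylorAug K m) := by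
  intro f
  have hf : taylorAug K m f = 0 ↔ f ![] ∈ sqIdeal K m := by
    simp [taylorAug, Ideal.Quotient.eq_zero_iff_mem]
  rw [hf]
  constructor
  · intro h
    have h' : ∀ r ∈ sqIdeal K m, Finsupp.single ![] r ∈ LinearMap.range (taylorD K m 0) := by
      intro r hr
      induction hr using Submodule.span_induction with
      | mem r hr =>
        obtain ⟨j, rfl⟩ := hr
        exact ⟨Finsupp.single ![j] 1, by rw [taylorD_zero_single]; simp⟩
      | zero => simp
      | add r s _ _ hr hs => rw [Finsupp.single_add]; exact add_mem hr hs
      | smul c r _ hr => rw [← Finsupp.smul_single]; exact Submodule.smul_mem _ _ hr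
    obtain ⟨x, hx⟩ := h' _ h
    refine ⟨x, hx.trans ?_⟩
    refine Finsupp.ext fun t => ?_
    rw [Subsingleton.elim t ![], Finsupp.single_eq_same]
  · have key : ∀ x, (taylorD K m 0 x) ![] ∈ sqIdeal K m := by
      intro x
      induction x using Finsupp.induction_linear with
      | zero => simp
      | add f g hf hg =>
        simp only [map_add, Finsupp.add_apply]
        exact add_mem hf hg
      | single t x =>
        rw [taylorD_zero_single, Finsupp.single_eq_same]
        exact Ideal.mul_mem_right _ _ (Ideal.subset_span ⟨_, rfl⟩)
    rintro ⟨x, rfl⟩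
    exact key x

end Taylor

/-! ### Reduction to the divisibility relation and comparison of Betti numbers -/

section Main
open MvPolynomial Limits

/-- The relation `lcm(t) ∣ lcm(s)` is determined by the hypergraph: every edge met by `t` must be
met by `s`. -/
lemma lcmSupp_subset_iff {n μ : ℕ} (m : Fin μ → Finset (Fin n)) {i l : ℕ}
    (t : Fin i → Fin μ) (s : Fin l → Fin μ) :
    lcmSupp m t ⊆ lcmSupp m s ↔
      ∀ G ∈ hgEdges m, (∃ k, t k ∈ G) → ∃ k, s k ∈ G := by
  constructor
  · rintro h G ⟨-, v, rfl⟩ ⟨k, hk⟩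
    have hv : v ∈ lcmSupp m s := h (by simpa [lcmSupp] using ⟨k, by simpa using hk⟩)
    simpa [lcmSupp] using hv
  · intro h v hv
    simp only [lcmSupp, Finset.mem_biUnion, Finset.mem_univ, true_and] at hv ⊢
    obtain ⟨k, hk⟩ := hv
    simpa using h (Finset.univ.filter fun j => v ∈ m j) ⟨⟨t k, by simpa using hk⟩, v, rfl⟩
      ⟨k, by simpa using hk⟩

/-- Adding an edge all of whose vertices are closed does not change the divisibility relation: if
`t` contains a vertex `j` of the new edge `F`, then the edge `{j}` already forces `s` to contain `j`. -/
lemma lcmSupp_subset_congr {n n' μ : ℕ} {m : Fin μ → Finset (Fin n)}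
    {m' : Fin μ → Finset (Fin n')} {F : Finset (Fin μ)}
    (hunion : hgEdges m = hgEdges m' ∪ {F})
    (hclosed : ∀ j ∈ F, ({j} : Finset (Fin μ)) ∈ hgEdges m') {i l : ℕ}
    (t : Fin i → Fin μ) (s : Fin l → Fin μ) :
    lcmSupp m t ⊆ lcmSupp m s ↔ lcmSupp m' t ⊆ lcmSupp m' s := by
  rw [lcmSupp_subset_iff, lcmSupp_subset_iff, hunion]
  constructor
  · exact fun h G hG => h G (Or.inl hG)
  · rintro h G (hG | rfl) ⟨k, hk⟩
    · exact h G hG ⟨k, hk⟩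
    · obtain ⟨l, hl⟩ := h {t k} (hclosed _ hk) ⟨k, by simp⟩
      exact ⟨l, by rw [Finset.mem_singleton.1 hl]; exact hk⟩

/-- `K` as a module over the polynomial ring, through evaluation at `0`. -/
noncomputable abbrev evalModule (K : Type) [Field K] (n : ℕ) : Module (MvPolynomial (Fin n) K) K :=
  Module.compHom K (MvPolynomial.aeval (fun _ : Fin n => (0 : K))).toRingHom

open Classical in
lemma aeval_taylorWeight (K : Type) [Field K] {n μ : ℕ} (m : Fin μ → Finset (Fin n))
    (i : ℕ) (t : Fin (i + 1) → Fin μ) (s : Fin i → Fin μ) :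
    aeval (fun _ : Fin n => (0 : K)) (taylorWeight K m i t s) =
      if lcmSupp m t ⊆ lcmSupp m s then 1 else 0 := by
  rw [taylorWeight, mon, map_prod]
  simp only [aeval_X, Finset.prod_const, zero_pow_eq, Finset.card_eq_zero,
    Finset.sdiff_eq_empty_iff_subset]

open Classical in
/-- The Taylor differential reduced modulo the variables: only the boundary terms with
`lcm(t) = lcm(s)` survive, with their signs. -/
noncomputable def redD (K : Type) [Field K] {n μ : ℕ} (m : Fin μ → Finset (Fin n)) (i : ℕ) :=
  wbd (V := Fin μ) K (fun _ t s => if lcmSupp m t ⊆ lcmSupp m s then (1 : K) else 0) i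

/-- Equality of the underlying functions only, since the two maps are linear over different rings. -/
lemma wbd_eq_redD (K : Type) [Field K] {n μ : ℕ} (m : Fin μ → Finset (Fin n)) (i : ℕ) :
    letI := evalModule K n
    ⇑(wbd (S := MvPolynomial (Fin n) K) K (taylorWeight K m) i) = ⇑(redD K m i) := by
  let _ := evalModule K n
  funext f
  induction f using Finsupp.induction_linear with
  | zero => simp
  | add f g hf hg => simp only [map_add, hf, hg]
  | single t x =>
    rw [redD, wbd_single, wbd_single]
    refine Finset.sum_congr rfl fun s _ => ?_
    have h : taylorWeight K m i t s • x =
        aeval (fun _ : Fin n => (0 : K)) (taylorWeight K m i t s) • x := rfl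
    simp only [h, aeval_taylorWeight]

lemma bettiNumber_ne_zero_iff (K : Type) [Field K] {n : ℕ}
    (I : Ideal (MvPolynomial (Fin n) K)) (i : ℕ) :
    letI := evalModule K n
    bettiNumber K I i ≠ 0 ↔ ¬ IsZero (((Tor (ModuleCat (MvPolynomial (Fin n) K)) i).obj
      (ModuleCat.of _ (MvPolynomial (Fin n) K ⧸ I))).obj (ModuleCat.of _ K)) := by
  let _ := evalModule K n
  rw [ModuleCat.isZero_iff_subsingleton, ne_eq, bettiNumber, not_iff_not]
  let _ : Module K (((Tor (ModuleCat (MvPolynomial (Fin n) K)) i).obj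
      (ModuleCat.of _ (MvPolynomial (Fin n) K ⧸ I))).obj (ModuleCat.of _ K)) :=
    Module.compHom _ (MvPolynomial.C : K →+* MvPolynomial (Fin n) K)
  exact rank_zero_iff

/-- The vanishing of a Betti number in positive degree is read off from the reduced Taylor complex. -/
lemma bettiNumber_succ_ne_zero_iff (K : Type) [Field K] {n μ : ℕ} (m : Fin μ → Finset (Fin n))
    (i : ℕ) : bettiNumber K (sqIdeal K m) (i + 1) ≠ 0 ↔
      ¬ Function.Exact (redD K m (i + 1)) (redD K m i) := by
  let _ := evalModule K n
  rw [bettiNumber_ne_zero_iff, not_iff_not,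
    isZero_tor_iff_exact i (fun i => (Fin i → Fin μ) →₀ MvPolynomial (Fin n) K) (taylorD K m)
      (taylorD_exact K m) _ (taylorAug K m) (taylorAug_exact K m) (taylorAug_surjective K m),
    exact_wbd_rTensor_iff, wbd_eq_redD, wbd_eq_redD]

/-- Membership of `0` does not affect the supremum of a set of natural numbers, and unbounded sets
have supremum `0` by convention; so only membership of positive numbers matters. -/
lemma sSup_le_of_succ {A B : Set ℕ} (h : ∀ i, i + 1 ∈ A ↔ i + 1 ∈ B) : sSup A ≤ sSup B := by
  by_cases hB : BddAbove B
  · rcases A.eq_empty_or_nonempty with rfl | hA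
    · simp
    · refine csSup_le hA fun a ha => ?_
      cases a with
      | zero => exact Nat.zero_le _
      | succ a => exact le_csSup hB ((h a).1 ha)
  · have hA : ¬ BddAbove A := by
      rintro ⟨b, hb⟩
      refine hB ⟨b, fun a ha => ?_⟩
      cases a with
      | zero => exact Nat.zero_le _
      | succ a => exact hb ((h a).2 ha)
    rw [Nat.sSup_of_not_bddAbove hA]
    exact Nat.zero_le _

end Main


/-- Let `I ⊆ R` and `I' ⊆ R'` be square-free monomial ideals in
polynomial rings over the same field `K` (encoded by the supports of their minimal
generators: nonempty supports forming antichains), each with `μ` minimal generators and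
with separated hypergraphs on the common vertex set `{1,…,μ}`, such that
`H(I) = H(I') ∪ {F}` where `F = {i₁,…,i_r}` and the singleton `{i_j}` belongs to `H(I')`
for every `1 ≤ j ≤ r` (every vertex of `F` is closed in `H(I')`).  Then
`pd(R/I) = pd(R'/I')`. -/
theorem stmt15 (K : Type) [Field K] (μ n n' : ℕ) (hμ : 1 ≤ μ)
    (m : Fin μ → Finset (Fin n)) (m' : Fin μ → Finset (Fin n'))
    (hne : ∀ j, (m j).Nonempty) (hne' : ∀ j, (m' j).Nonempty)
    (hmin : ∀ j k, j ≠ k → ¬ m j ⊆ m k) (hmin' : ∀ j k, j ≠ k → ¬ m' j ⊆ m' k)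
    (hsep : SeparatedHG m) (hsep' : SeparatedHG m')
    (F : Finset (Fin μ))
    (hunion : hgEdges m = hgEdges m' ∪ {F})
    (hclosed : ∀ j ∈ F, ({j} : Finset (Fin μ)) ∈ hgEdges m') :
    pdim K (sqIdeal K m) = pdim K (sqIdeal K m') := by
  have hred (i : ℕ) : redD K m i = redD K m' i := by
    classical
    simp only [redD, lcmSupp_subset_congr hunion hclosed]
  have h (i : ℕ) : bettiNumber K (sqIdeal K m) (i + 1) ≠ 0 ↔
      bettiNumber K (sqIdeal K m') (i + 1) ≠ 0 := by
    rw [bettiNumber_succ_ne_zero_iff, bettiNumber_succ_ne_zero_iff, hred, hred]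
  exact le_antisymm (sSup_le_of_succ h) (sSup_le_of_succ fun i => (h i).symm)
end

section
/- Let I be a square-free monomial ideal in R = K[x_1,…,x_n] with minimal generators {m_1,…,m_μ} and separated hypergraph H = H(I). Let J be a joint of H such that no edge of H of cardinality at least 3 contains a vertex lying on some branch departing from J, and suppose there is a branch J, v_1, v_2 of length 2 departing from J in which v_1 is open and v_2 is closed. Then pd(R/I) = pd(R/I'), where I' is the ideal generated by the minimal generators of I other than m_J (so the hypergraph of I' is obtained from H by deleting the vertex J, i.e., removing J from every edge). -/
/-!
Since no large edge meets the branch, the generators have the shape `m_{v₁} = ab`,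
`m_{v₂} = bc`, `m_J = ad`, where the monomials `a`, `b`, `c` are nontrivial, involve disjoint sets
of variables, and the variables of `a`, `b`, `c` divide none of the other generators. Let `G` be the
ideal of those other generators, `I' = G + (ab, bc)` and `I = I' + (ad)`.

All computations use the long exact `Tor(-, K)`-sequence of
`0 → R/(L : f) → R/L → R/(L + (f)) → 0`.
A map that factors through multiplication by a monomial without constant term vanishes on
`Tor(-, K)`, so the sequences for adding `bc` to `G` and then `ab` to `G + (bc)` (colon `G + (c)`)
split, and `pd(R/I') = pd(R/G) + 2` (`torZero_of_free`, `torZero_split`). On the other hand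
`I' : ad = (G : d) + (b)`, and the colon by a monomial does not raise the projective dimension
(`torZero_sdiff`, resting on `TorZero.colon_of_split`), so `pd(R/(I' : ad)) ≤ pd(R/G) + 1`.
The sequence for adding `ad` to `I'` therefore gives an injection
`Tor_p(R/I', K) → Tor_p(R/I, K)` for `p = pd(R/I')` and the vanishing of `Tor_i(R/I, K)` for
`i > p`, that is, `pd(R/I) = pd(R/I')`.
-/

open CategoryTheory

/-- The degree of a vertex `v` in a hypergraph `H`: the number of cardinality-2 edges of
`H` containing `v`. -/
noncomputable def hgDeg {μ : ℕ} (H : Set (Finset (Fin μ))) (v : Fin μ) : ℕ :=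
  {F | F ∈ H ∧ F.card = 2 ∧ v ∈ F}.ncard

/-- A joint of a hypergraph is a vertex of degree at least `3`. -/
def IsJoint {μ : ℕ} (H : Set (Finset (Fin μ))) (v : Fin μ) : Prop := 3 ≤ hgDeg H v

/-- `v` enumerates a branch of length `k` departing from `w` in the hypergraph `H`:
a sequence of distinct vertices `w = v₀, v₁, …, v_k` (`k ≥ 1`) with each
`{v_{l−1}, v_l}` an edge of `H`, each `v_l` of degree `2` for `1 ≤ l ≤ k−1`, and `v_k`
of degree `1`. -/
def IsBranchFrom {μ : ℕ} (H : Set (Finset (Fin μ))) (w : Fin μ) (k : ℕ)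
    (v : Fin (k + 1) → Fin μ) : Prop :=
  1 ≤ k ∧ Function.Injective v ∧ v 0 = w ∧
  (∀ l : Fin k, ({v l.castSucc, v l.succ} : Finset (Fin μ)) ∈ H) ∧
  (∀ l : Fin (k + 1), 0 < (l : ℕ) → (l : ℕ) < k → hgDeg H (v l) = 2) ∧
  hgDeg H (v (Fin.last k)) = 1

/-! ### Tor against a fixed second argument -/

section Homological
open MonoidalCategory
variable {R : Type} [CommRing R] {N : ModuleCat.{0} R} (P : ProjectiveResolution N)

/-- The functor `M ↦ M ⊗ P_•` for a projective resolution `P_•` of `N`, on which every `Tor`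
group is computed, so that it is functorial in the first variable on the nose. -/
noncomputable def tensorRes : ModuleCat.{0} R ⥤ ChainComplex (ModuleCat.{0} R) ℕ where
  obj M := (((tensoringLeft (ModuleCat.{0} R)).obj M).mapHomologicalComplex _).obj P.complex
  map f := (NatTrans.mapHomologicalComplex ((tensoringLeft (ModuleCat.{0} R)).map f) _).app P.complex
  map_id M := by ext : 1; simp
  map_comp f g := by ext : 1; simp

instance : (tensorRes P).PreservesZeroMorphisms where
  map_zero A B := by
    ext j : 1
    apply ModuleCat.hom_ext
    apply TensorProduct.ext'
    intro a b
    exact TensorProduct.zero_tmul _ b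

/-- `Tor_i(-, N)`, computed as the `i`-th homology of `- ⊗ P_•`. -/
noncomputable def torF (i : ℕ) : ModuleCat.{0} R ⥤ ModuleCat.{0} R :=
  tensorRes P ⋙ HomologicalComplex.homologyFunctor _ _ i

theorem isZero_torF_iff (i : ℕ) (M : ModuleCat.{0} R) :
    Limits.IsZero ((torF P i).obj M) ↔
      Limits.IsZero (((Tor (ModuleCat.{0} R) i).obj M).obj N) :=
  (P.isoLeftDerivedObj ((tensoringLeft (ModuleCat.{0} R)).obj M) i).symm.isZero_iff

instance (i : ℕ) : Module.Flat R (P.complex.X i) := by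
  have : Module.Projective R (P.complex.X i) :=
    (IsProjective.iff_projective _).2 (P.projective i)
  infer_instance

/-- The terms of `P_•` are flat, so a short exact sequence of modules gives a short exact
sequence of complexes. -/
theorem shortExact_tensorRes {S : ShortComplex (ModuleCat.{0} R)} (hS : S.ShortExact) :
    (ShortComplex.mk ((tensorRes P).map S.f) ((tensorRes P).map S.g)
      (by rw [← Functor.map_comp, S.zero, Functor.map_zero])).ShortExact := by
  apply HomologicalComplex.shortExact_of_degreewise_shortExact
  intro i
  have h1 := (ShortComplex.ShortExact.moduleCat_exact_iff_function_exact S).1 hS.exact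
  have hm := (ModuleCat.mono_iff_injective _).1 hS.mono_f
  have he := (ModuleCat.epi_iff_surjective _).1 hS.epi_g
  refine ShortComplex.ShortExact.mk' ?_ ?_ ?_
  · rw [ShortComplex.ShortExact.moduleCat_exact_iff_function_exact]
    exact rTensor_exact (P.complex.X i) h1 he
  · rw [ModuleCat.mono_iff_injective]
    exact Module.Flat.rTensor_preserves_injective_linearMap (M := P.complex.X i) S.f.hom hm
  · rw [ModuleCat.epi_iff_surjective]
    exact LinearMap.rTensor_surjective (P.complex.X i) he

/-- If `x` annihilates `N`, then multiplication by `x` is zero on `Tor_i(M, N)`: multiplication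
by `x` on `P_•` lifts the zero endomorphism of `N`, hence is null-homotopic. -/
theorem torF_smul_eq_zero (x : R) (hx : ∀ y : N, x • y = 0) (i : ℕ) (M : ModuleCat.{0} R) :
    (torF P i).map (x • 𝟙 M) = 0 := by
  have h : Homotopy (x • 𝟙 P.complex) 0 := by
    refine ProjectiveResolution.liftHomotopyZero (P := P) (Q := P) _ ?_
    apply HomologicalComplex.hom_ext
    intro j
    rcases j with _ | j
    · ext z
      exact (map_smul (P.π.f 0).hom x z).trans (hx _)
    · simp
  have h2 := (((tensoringLeft (ModuleCat.{0} R)).obj M).mapHomotopy h).homologyMap_eq i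
  have h3 : (tensorRes P).map (x • 𝟙 M) =
      (((tensoringLeft (ModuleCat.{0} R)).obj M).mapHomologicalComplex _).map (x • 𝟙 P.complex) := by
    ext j : 1
    apply ModuleCat.hom_ext
    apply TensorProduct.ext'
    intro a b
    exact TensorProduct.smul_tmul x a b
  refine ((congrArg (fun f => HomologicalComplex.homologyMap f i) h3).trans h2).trans ?_
  rw [Functor.map_zero, HomologicalComplex.homologyMap_zero]
  rfl

theorem isZero_torF_self (i : ℕ) : Limits.IsZero ((torF P (i + 1)).obj (ModuleCat.of R R)) := by
  have e : (tensorRes P).obj (ModuleCat.of R R) ≅ P.complex :=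
    HomologicalComplex.Hom.isoOfComponents (fun j => λ_ (P.complex.X j)) (by
      intro a b _
      exact (leftUnitor_naturality (P.complex.d a b)).symm)
  refine Limits.IsZero.of_iso ?_ ((HomologicalComplex.homologyFunctor _ _ (i+1)).mapIso e)
  exact (P.complex_exactAt_succ i).isZero_homology

variable {S : ShortComplex (ModuleCat.{0} R)} (hS : S.ShortExact)
include hS
theorem torF_three (i : ℕ) (h2 : Limits.IsZero ((torF P (i + 1)).obj S.X₂))
   (h1 : Limits.IsZero ((torF P i).obj S.X₁)) : Limits.IsZero ((torF P (i + 1)).obj S.X₃) :=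
  (((shortExact_tensorRes P hS).homology_exact₃ (i+1) i (by simp)).isZero_of_both_zeros
    (h2.eq_of_src _ _) (h1.eq_of_tgt _ _))

theorem torF_two (i : ℕ) (h1 : Limits.IsZero ((torF P i).obj S.X₁))
   (h3 : Limits.IsZero ((torF P i).obj S.X₃)) : Limits.IsZero ((torF P i).obj S.X₂) :=
  (((shortExact_tensorRes P hS).homology_exact₂ i).isZero_of_both_zeros
    (h1.eq_of_src _ _) (h3.eq_of_tgt _ _))

/-- If `S.f` induces zero on `Tor`, the long exact sequence breaks into short exact pieces
`0 → Tor_{i+1}(S.X₂) → Tor_{i+1}(S.X₃) → Tor_i(S.X₁) → 0`. -/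
theorem torF_split (i : ℕ) (h0 : ∀ j, (torF P j).map S.f = 0)
   (h3 : Limits.IsZero ((torF P (i+1)).obj S.X₃)) :
   Limits.IsZero ((torF P (i+1)).obj S.X₂) ∧ Limits.IsZero ((torF P i).obj S.X₁) :=
  ⟨((shortExact_tensorRes P hS).homology_exact₂ (i+1)).isZero_of_both_zeros
    (h0 _) (h3.eq_of_tgt _ _),
   ((shortExact_tensorRes P hS).homology_exact₁ (i+1) i (by simp)).isZero_of_both_zeros
    (h3.eq_of_src _ _) (h0 _)⟩

theorem torF_epi (i : ℕ) (h3 : Limits.IsZero ((torF P i).obj S.X₃)) :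
   Epi ((torF P i).map S.f) :=
  ((shortExact_tensorRes P hS).homology_exact₂ i).epi_f (h3.eq_of_tgt _ _)
omit hS

/-! ### Colon sequences for quotients by ideals -/

/-- `Tor_i(R/I, N) = 0`. -/
def TorZero (I : Ideal R) (i : ℕ) : Prop :=
  Limits.IsZero ((torF P i).obj (ModuleCat.of R (R ⧸ I)))

/-- Multiplication by `f` as a map `R/C → R/I`, defined when `f C ⊆ I`. -/
noncomputable def mulMap (C I : Ideal R) (f : R) (h : ∀ p ∈ C, f * p ∈ I) :
    (R ⧸ C) →ₗ[R] (R ⧸ I) :=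
  Submodule.mapQ C I (LinearMap.mulLeft R f) h

theorem mulMap_mk (C I : Ideal R) (f : R) (h : ∀ p ∈ C, f * p ∈ I) (p : R) :
    mulMap C I f h (Ideal.Quotient.mk C p) = Ideal.Quotient.mk I (f * p) := rfl

variable {C I Q : Ideal R} {f : R} (hC : ∀ p, p ∈ C ↔ f * p ∈ I)
    (hQ : ∀ p, p ∈ Q ↔ ∃ q, p - f * q ∈ I)

theorem le_of_hQ (hQ : ∀ p, p ∈ Q ↔ ∃ q, p - f * q ∈ I) : ∀ p ∈ I, 1 * p ∈ Q :=
  fun p hp => (hQ _).2 ⟨0, by simpa using hp⟩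

theorem exact_colon : Function.Exact (mulMap C I f fun p hp => (hC p).1 hp)
    (mulMap I Q 1 (le_of_hQ hQ)) := by
  intro y
  obtain ⟨p, rfl⟩ := Ideal.Quotient.mk_surjective y
  rw [mulMap_mk, Ideal.Quotient.eq_zero_iff_mem, one_mul, hQ]
  constructor
  · rintro ⟨q, hq⟩
    exact ⟨Ideal.Quotient.mk C q, (Ideal.Quotient.eq.2 hq).symm⟩
  · rintro ⟨q, hq⟩
    obtain ⟨q, rfl⟩ := Ideal.Quotient.mk_surjective q
    exact ⟨q, Ideal.Quotient.eq.1 hq.symm⟩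

/-- The sequence `0 → R/(I : f) → R/I → R/(I + (f)) → 0`. The ideals `C = I : f` and
`Q = I + (f)` are specified by their membership criteria, so that any convenient presentation of
them can be used. -/
noncomputable def colonComplex : ShortComplex (ModuleCat.{0} R) :=
  ShortComplex.mk (ModuleCat.ofHom (mulMap C I f fun p hp => (hC p).1 hp))
    (ModuleCat.ofHom (mulMap I Q 1 (le_of_hQ hQ)))
    (ModuleCat.hom_ext (exact_colon hC hQ).linearMap_comp_eq_zero)

theorem colonComplex_shortExact : (colonComplex hC hQ).ShortExact := by
  refine ShortComplex.ShortExact.mk' ?_ ?_ ?_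
  · rw [ShortComplex.ShortExact.moduleCat_exact_iff_function_exact]
    exact exact_colon hC hQ
  · rw [ModuleCat.mono_iff_injective]
    refine (injective_iff_map_eq_zero (mulMap C I f fun p hp => (hC p).1 hp)).2 ?_
    intro y hy
    obtain ⟨p, rfl⟩ := Ideal.Quotient.mk_surjective y
    rw [mulMap_mk, Ideal.Quotient.eq_zero_iff_mem] at hy
    exact Ideal.Quotient.eq_zero_iff_mem.2 ((hC p).2 hy)
  · rw [ModuleCat.epi_iff_surjective]
    intro y
    obtain ⟨p, rfl⟩ := Ideal.Quotient.mk_surjective y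
    exact ⟨Ideal.Quotient.mk I p, by
      refine (mulMap_mk I Q 1 (le_of_hQ hQ) p).trans ?_
      rw [one_mul]⟩

include hC hQ
theorem TorZero.quot {i : ℕ} (h2 : TorZero P I (i + 1)) (h1 : TorZero P C i) :
    TorZero P Q (i + 1) := torF_three P (colonComplex_shortExact hC hQ) i h2 h1

theorem TorZero.mid {i : ℕ} (h1 : TorZero P C i) (h3 : TorZero P Q i) :
    TorZero P I i := torF_two P (colonComplex_shortExact hC hQ) i h1 h3

/-- When `f = a b` with `a` annihilating `N` and `b (I : f) ⊆ I`, the map `R/(I : f) → R/I` factors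
through multiplication by `a` on `R/I`, so it induces zero on `Tor`. -/
theorem TorZero.split {a b : R} (ha : ∀ y : N, a • y = 0) (hf : f = a * b)
    (hb : ∀ p ∈ C, b * p ∈ I) {i : ℕ} (h3 : TorZero P Q (i + 1)) :
    TorZero P I (i + 1) ∧ TorZero P C i := by
  refine torF_split P (colonComplex_shortExact hC hQ) i (fun j => ?_) h3
  have : (colonComplex hC hQ).f = ModuleCat.ofHom (mulMap C I b hb) ≫ (a • 𝟙 _) := by
    apply ModuleCat.hom_ext
    apply LinearMap.ext
    intro y
    obtain ⟨p, rfl⟩ := Ideal.Quotient.mk_surjective y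
    change Ideal.Quotient.mk I (f * p) = Ideal.Quotient.mk I (a * (b * p))
    rw [hf, mul_assoc]
  refine (congrArg (torF P j).map this).trans ((Functor.map_comp _ _ _).trans ?_)
  exact (congrArg (_ ≫ ·) (torF_smul_eq_zero P a ha j _)).trans Limits.comp_zero
omit hC hQ

theorem isZero_of_epi_zero {A B : ModuleCat.{0} R} (g : A ⟶ B) [Epi g] (h : g = 0) :
   Limits.IsZero B := by
  subst h
  exact Limits.IsZero.of_epi_zero A B

/-- Let `I = I₀ + x I₁` with `I₀ ⊆ I₁`, `x` regular modulo `I₀` and `x N = 0`. In the exact sequence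
`0 → R/I₀ → R/I₀ ⊕ R/I₁ → R/I → 0`, whose first map is `(x, 1)`, vanishing of `Tor_i(R/I)` makes the
first map surjective on `Tor_i`. Its first component is zero there, so `Tor_i(R/I₀) = 0`, and
then `Tor_i(R/I₁) = 0`. -/
theorem TorZero.colon_of_split {I₀ I₁ : Ideal R} {x : R} (hx : ∀ y : N, x • y = 0)
    (h01 : I₀ ≤ I₁) (h0 : I₀ ≤ I) (h1 : ∀ p ∈ I₁, x * p ∈ I)
    (hI : ∀ p ∈ I, ∃ q ∈ I₁, p - x * q ∈ I₀) (hreg : ∀ p, x * p ∈ I₀ → p ∈ I₀)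
    {i : ℕ} (h : TorZero P I i) : TorZero P I₁ i := by
  have hx0 : ∀ p ∈ I₀, x * p ∈ I₀ := fun p hp => I₀.mul_mem_left x hp
  have h01' : ∀ p ∈ I₀, 1 * p ∈ I₁ := fun p hp => by simpa using h01 hp
  have h0' : ∀ p ∈ I₀, 1 * p ∈ I := fun p hp => by simpa using h0 hp
  let φ : (R ⧸ I₀) →ₗ[R] (R ⧸ I₀) × (R ⧸ I₁) := (mulMap I₀ I₀ x hx0).prod (mulMap I₀ I₁ 1 h01')
  let ψ : (R ⧸ I₀) × (R ⧸ I₁) →ₗ[R] (R ⧸ I) :=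
    (mulMap I₀ I 1 h0').coprod (-(mulMap I₁ I x h1))
  have hφ : ∀ p, φ (Ideal.Quotient.mk I₀ p) = (Ideal.Quotient.mk I₀ (x * p), Ideal.Quotient.mk I₁ p) :=
    fun p => by
      change (Ideal.Quotient.mk I₀ (x * p), Ideal.Quotient.mk I₁ (1 * p)) = _
      rw [one_mul]
  have hψ : ∀ p q, ψ (Ideal.Quotient.mk I₀ p, Ideal.Quotient.mk I₁ q) = Ideal.Quotient.mk I (p - x * q) :=
    fun p q => by
      change Ideal.Quotient.mk I (1 * p) + - Ideal.Quotient.mk I (x * q) = _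
      rw [one_mul, map_sub, sub_eq_add_neg]
  have hex : Function.Exact φ ψ := by
    rintro ⟨a, b⟩
    obtain ⟨a, rfl⟩ := Ideal.Quotient.mk_surjective a
    obtain ⟨b, rfl⟩ := Ideal.Quotient.mk_surjective b
    rw [hψ, Ideal.Quotient.eq_zero_iff_mem]
    constructor
    · intro hab
      obtain ⟨q, hq, hq'⟩ := hI _ hab
      refine ⟨Ideal.Quotient.mk I₀ (b + q), ?_⟩
      rw [hφ, Prod.mk.injEq]
      constructor
      · rw [eq_comm, Ideal.Quotient.eq]
        convert hq' using 1; ring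
      · rw [Ideal.Quotient.eq]
        convert hq using 1; ring
    · rintro ⟨c, hc⟩
      obtain ⟨c, rfl⟩ := Ideal.Quotient.mk_surjective c
      rw [hφ, Prod.mk.injEq, Ideal.Quotient.eq, Ideal.Quotient.eq] at hc
      have := I.sub_mem (h1 _ hc.2) (h0 hc.1)
      convert this using 1; ring
  let S : ShortComplex (ModuleCat.{0} R) := ShortComplex.mk (ModuleCat.ofHom φ) (ModuleCat.ofHom ψ)
    (ModuleCat.hom_ext hex.linearMap_comp_eq_zero)
  have hS : S.ShortExact := by
    refine ShortComplex.ShortExact.mk' ?_ ?_ ?_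
    · rw [ShortComplex.ShortExact.moduleCat_exact_iff_function_exact]
      exact hex
    · rw [ModuleCat.mono_iff_injective]
      refine (injective_iff_map_eq_zero φ).2 ?_
      intro y hy
      obtain ⟨p, rfl⟩ := Ideal.Quotient.mk_surjective y
      rw [hφ, Prod.mk_eq_zero, Ideal.Quotient.eq_zero_iff_mem] at hy
      exact Ideal.Quotient.eq_zero_iff_mem.2 (hreg _ hy.1)
    · rw [ModuleCat.epi_iff_surjective]
      intro y
      obtain ⟨p, rfl⟩ := Ideal.Quotient.mk_surjective y
      refine ⟨(Ideal.Quotient.mk I₀ p, Ideal.Quotient.mk I₁ 0), ?_⟩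
      refine (hψ p 0).trans ?_
      simp
  have hepi := torF_epi P hS i h
  let fst : S.X₂ ⟶ ModuleCat.of R (R ⧸ I₀) := ModuleCat.ofHom (LinearMap.fst R _ _)
  let snd : S.X₂ ⟶ ModuleCat.of R (R ⧸ I₁) := ModuleCat.ofHom (LinearMap.snd R _ _)
  have : IsSplitEpi fst := ⟨⟨ModuleCat.ofHom (LinearMap.inl R _ _), rfl⟩⟩
  have : IsSplitEpi snd := ⟨⟨ModuleCat.ofHom (LinearMap.inr R _ _), rfl⟩⟩
  have hz : Limits.IsZero ((torF P i).obj S.X₁) := by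
    refine isZero_of_epi_zero ((torF P i).map S.f ≫ (torF P i).map fst) ?_
    rw [← Functor.map_comp]
    exact torF_smul_eq_zero P x hx i _
  refine isZero_of_epi_zero ((torF P i).map S.f ≫ (torF P i).map snd) (hz.eq_of_src _ _)

theorem torZero_bot (i : ℕ) : TorZero P (⊥ : Ideal R) (i + 1) :=
  (isZero_torF_self P i).of_iso ((torF P (i + 1)).mapIso
    (Submodule.quotEquivOfEqBot (⊥ : Ideal R) rfl).toModuleIso)

/-- Right exactness of the tensor product, in terms of `Tor₀`. -/
theorem TorZero.zero_of_le (h : I ≤ Q) (hI : TorZero P I 0) : TorZero P Q 0 := by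
  let g : ModuleCat.of R (R ⧸ I) ⟶ ModuleCat.of R (R ⧸ Q) := ModuleCat.ofHom (Submodule.factor h)
  have hg : Epi ((tensorRes P).map g) := by
    have (j : ℕ) : Epi (((tensorRes P).map g).f j) := by
      rw [ModuleCat.epi_iff_surjective]
      exact LinearMap.rTensor_surjective (P.complex.X j) (Submodule.factor_surjective h)
    exact HomologicalComplex.epi_of_epi_f _ this
  have : Epi ((torF P 0).map g) := by
    change Epi (HomologicalComplex.homologyMap ((tensorRes P).map g) 0)
    have h1 := HomologicalComplex.homologyι_naturality ((tensorRes P).map g) 0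
    have : IsIso (((tensorRes P).obj (ModuleCat.of R (R ⧸ I))).homologyι 0) :=
      HomologicalComplex.isIso_homologyι _ 0 _ rfl (by simp)
    have : IsIso (((tensorRes P).obj (ModuleCat.of R (R ⧸ Q))).homologyι 0) :=
      HomologicalComplex.isIso_homologyι _ 0 _ rfl (by simp)
    have h2 : Epi (HomologicalComplex.homologyMap ((tensorRes P).map g) 0 ≫
        ((tensorRes P).obj (ModuleCat.of R (R ⧸ Q))).homologyι 0) := by
      rw [h1]; infer_instance
    have h3 : HomologicalComplex.homologyMap ((tensorRes P).map g) 0 =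
      (HomologicalComplex.homologyMap ((tensorRes P).map g) 0 ≫
        ((tensorRes P).obj (ModuleCat.of R (R ⧸ Q))).homologyι 0) ≫ inv
        (((tensorRes P).obj (ModuleCat.of R (R ⧸ Q))).homologyι 0) := by
      rw [Category.assoc, IsIso.hom_inv_id, Category.comp_id]
    rw [h3]; infer_instance
  exact isZero_of_epi_zero ((torF P 0).map g) (hI.eq_of_src _ _)
end Homological

/-! ### Square-free monomial ideals -/

section Monomial
open MvPolynomial
variable {K : Type} [Field K] {n : ℕ}

/-- The square-free monomial with support `g`. -/
noncomputable def sqf (g : Finset (Fin n)) : MvPolynomial (Fin n) K := ∏ i ∈ g, X i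

/-- The ideal generated by the square-free monomials with supports in `G`; the generators need not
be minimal. -/
noncomputable def mIdeal (K : Type) [Field K] {n : ℕ} (G : Set (Finset (Fin n))) :
    Ideal (MvPolynomial (Fin n) K) := Ideal.span (sqf '' G)

theorem sqf_eq (g : Finset (Fin n)) :
    (sqf g : MvPolynomial (Fin n) K) = monomial (∑ i ∈ g, Finsupp.single i 1) 1 := by
  rw [sqf, monomial_sum_one]
  rfl

theorem ind_apply (g : Finset (Fin n)) (j : Fin n) :
    (∑ i ∈ g, Finsupp.single i (1 : ℕ)) j = if j ∈ g then 1 else 0 := by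
  simp [Finsupp.finsetSum_apply, Finsupp.single_apply]

theorem ind_le_iff (g : Finset (Fin n)) (e : Fin n →₀ ℕ) :
    (∑ i ∈ g, Finsupp.single i 1) ≤ e ↔ g ⊆ e.support := by
  rw [Finsupp.le_def]
  constructor
  · intro h j hj
    have := h j
    rw [ind_apply, if_pos hj] at this
    rw [Finsupp.mem_support_iff]; omega
  · intro h j
    rw [ind_apply]
    split_ifs with hj
    · have := h hj
      rw [Finsupp.mem_support_iff] at this; omega
    · exact Nat.zero_le _

theorem mem_mIdeal {G : Set (Finset (Fin n))} {p : MvPolynomial (Fin n) K} :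
    p ∈ mIdeal K G ↔ ∀ e ∈ p.support, ∃ g ∈ G, g ⊆ e.support := by
  have : (sqf '' G : Set (MvPolynomial (Fin n) K)) = (fun s => monomial s (1 : K)) ''
      ((fun g : Finset (Fin n) => ∑ i ∈ g, Finsupp.single i 1) '' G) := by
    rw [Set.image_image]
    exact Set.image_congr fun g _ => sqf_eq g
  rw [mIdeal, this, mem_ideal_span_monomial_image]
  simp only [Set.exists_mem_image, ind_le_iff]

theorem mIdeal_mono {G H : Set (Finset (Fin n))} (h : ∀ g ∈ G, ∃ g' ∈ H, g' ⊆ g) :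
    mIdeal K G ≤ mIdeal K H := by
  intro p hp
  rw [mem_mIdeal] at hp ⊢
  intro e he
  obtain ⟨g, hg, hge⟩ := hp e he
  obtain ⟨g', hg', h'⟩ := h g hg
  exact ⟨g', hg', h'.trans hge⟩

/-- The colon ideal of `mIdeal K G` by the monomial of `f` is generated by the supports `g \ f`. -/
theorem sqf_mul_mem {G : Set (Finset (Fin n))} (f : Finset (Fin n)) (p : MvPolynomial (Fin n) K) :
    p ∈ mIdeal K ((· \ f) '' G) ↔ sqf f * p ∈ mIdeal K G := by
  have hs (e : Fin n →₀ ℕ) : (∑ i ∈ f, Finsupp.single i 1 + e).support = f ∪ e.support := by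
    ext j
    rw [Finsupp.mem_support_iff, Finsupp.add_apply, ind_apply, Finset.mem_union,
      Finsupp.mem_support_iff]
    by_cases hj : j ∈ f <;> simp [hj]
  simp only [mem_mIdeal, Set.exists_mem_image, sqf_eq]
  constructor
  · intro h e he
    rw [mem_support_iff, coeff_monomial_mul'] at he
    split_ifs at he with hle
    · rw [one_mul, ← mem_support_iff] at he
      obtain ⟨g, hg, hge⟩ := h _ he
      refine ⟨g, hg, ?_⟩
      rw [← add_tsub_cancel_of_le hle, hs]
      exact sdiff_le_iff.1 hge
    · exact absurd rfl he
  · intro h e he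
    obtain ⟨g, hg, hge⟩ := h (∑ i ∈ f, Finsupp.single i 1 + e) (by
      rw [mem_support_iff, coeff_monomial_mul, one_mul]; exact mem_support_iff.1 he)
    rw [hs] at hge
    exact ⟨g, hg, sdiff_le_iff.2 hge⟩

theorem mem_mIdeal_insert {G : Set (Finset (Fin n))} (f : Finset (Fin n))
    (p : MvPolynomial (Fin n) K) :
    p ∈ mIdeal K (insert f G) ↔ ∃ q, p - sqf f * q ∈ mIdeal K G := by
  rw [mIdeal, Set.image_insert_eq, Ideal.mem_span_insert']
  constructor
  · rintro ⟨a, ha⟩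
    refine ⟨-a, ?_⟩
    rwa [mul_neg, sub_neg_eq_add, mul_comm]
  · rintro ⟨a, ha⟩
    refine ⟨-a, ?_⟩
    rwa [neg_mul, ← sub_eq_add_neg, mul_comm]

theorem sqf_union {a b : Finset (Fin n)} (h : Disjoint a b) :
    (sqf (a ∪ b) : MvPolynomial (Fin n) K) = sqf a * sqf b := Finset.prod_union h

/-- The residue field `K` at the origin, with the module structure by evaluation at `0` that enters
the definition of `bettiNumber`. -/
noncomputable def resField (K : Type) [Field K] (n : ℕ) :
    ModuleCat.{0} (MvPolynomial (Fin n) K) := by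
  letI : Module (MvPolynomial (Fin n) K) K :=
    Module.compHom K (MvPolynomial.aeval (fun _ : Fin n => (0 : K))).toRingHom
  exact ModuleCat.of _ K

theorem sqf_smul {a : Finset (Fin n)} (ha : a.Nonempty) (y : resField K n) :
    (sqf a : MvPolynomial (Fin n) K) • y = 0 := by
  obtain ⟨j, hj⟩ := ha
  have : aeval (fun _ : Fin n => (0 : K)) (sqf a : MvPolynomial (Fin n) K) = 0 := by
    rw [sqf, map_prod]
    exact Finset.prod_eq_zero hj (by simp)
  exact (congrArg (fun c : K => c * (show K from y)) this).trans (zero_mul (show K from y))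

theorem bettiNumber_ne_zero_iff_s17 (P : ProjectiveResolution (resField K n))
    (I : Ideal (MvPolynomial (Fin n) K)) (i : ℕ) :
    bettiNumber K I i ≠ 0 ↔ ¬ TorZero P I i := by
  rw [not_iff_not, TorZero, isZero_torF_iff, bettiNumber, ModuleCat.isZero_iff_subsingleton]
  let _ : Module (MvPolynomial (Fin n) K) K :=
    Module.compHom K (MvPolynomial.aeval (fun _ : Fin n => (0 : K))).toRingHom
  let M := ((Tor (ModuleCat (MvPolynomial (Fin n) K)) i).obj
      (ModuleCat.of _ ((MvPolynomial (Fin n) K) ⧸ I))).obj (ModuleCat.of _ K)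
  let _ : Module K M := Module.compHom M (MvPolynomial.C : K →+* MvPolynomial (Fin n) K)
  exact rank_zero_iff (R := K) (M := M)

variable (P : ProjectiveResolution (resField K n)) {G : Set (Finset (Fin n))}

theorem torZero_insert {f : Finset (Fin n)} {i : ℕ} (h1 : TorZero P (mIdeal K G) (i + 1))
    (h2 : TorZero P (mIdeal K ((· \ f) '' G)) i) : TorZero P (mIdeal K (insert f G)) (i + 1) :=
  TorZero.quot P (sqf_mul_mem f) (mem_mIdeal_insert f) h1 h2

theorem torZero_of_insert {f : Finset (Fin n)} {i : ℕ}
    (h1 : TorZero P (mIdeal K ((· \ f) '' G)) i)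
    (h2 : TorZero P (mIdeal K (insert f G)) i) : TorZero P (mIdeal K G) i :=
  TorZero.mid P (sqf_mul_mem f) (mem_mIdeal_insert f) h1 h2

/-- The hypothesis `hG` says that `sqf b` multiplies the colon ideal by `sqf (a ∪ b)` into
`mIdeal K G`. -/
theorem torZero_split {a b : Finset (Fin n)} (ha : a.Nonempty) (hab : Disjoint a b)
    (hG : ∀ g ∈ G, ∃ g' ∈ G, g' \ b ⊆ g \ (a ∪ b))
    {i : ℕ} (h : TorZero P (mIdeal K (insert (a ∪ b) G)) (i + 1)) :
    TorZero P (mIdeal K G) (i + 1) ∧ TorZero P (mIdeal K ((· \ (a ∪ b)) '' G)) i := by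
  refine TorZero.split P (sqf_mul_mem (a ∪ b)) (mem_mIdeal_insert (a ∪ b))
    (sqf_smul ha) (sqf_union hab) ?_ h
  intro p hp
  refine (sqf_mul_mem b p).1 (mIdeal_mono ?_ hp)
  rintro _ ⟨g, hg, rfl⟩
  obtain ⟨g', hg', hs⟩ := hG g hg
  exact ⟨_, ⟨g', hg', rfl⟩, hs⟩

theorem image_sdiff_of_disjoint {f : Finset (Fin n)} (hd : ∀ g ∈ G, Disjoint g f) :
    (· \ f) '' G = G := by
  refine (Set.image_congr fun g hg => Finset.sdiff_eq_self_of_disjoint (hd g hg)).trans ?_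
  exact Set.image_id' G

theorem torZero_free {f : Finset (Fin n)} (hd : ∀ g ∈ G, Disjoint g f) {i : ℕ}
    (h1 : TorZero P (mIdeal K G) (i + 1)) (h2 : TorZero P (mIdeal K G) i) :
    TorZero P (mIdeal K (insert f G)) (i + 1) :=
  torZero_insert P h1 (by rwa [image_sdiff_of_disjoint hd])

/-- Adjoining a nontrivial monomial in new variables raises the projective dimension by one. -/
theorem torZero_of_free {f : Finset (Fin n)} (hf : f.Nonempty) (hd : ∀ g ∈ G, Disjoint g f)
    {i : ℕ} (h : TorZero P (mIdeal K (insert f G)) (i + 1)) :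
    TorZero P (mIdeal K G) (i + 1) ∧ TorZero P (mIdeal K G) i := by
  have := torZero_split P (G := G) (b := ∅) (i := i) hf (Finset.disjoint_empty_right f)
    (fun g hg => ⟨g, hg, by
      rw [Finset.sdiff_empty, Finset.union_empty, Finset.sdiff_eq_self_of_disjoint (hd g hg)]⟩)
    (by rwa [Finset.union_empty])
  rwa [Finset.union_empty, image_sdiff_of_disjoint hd] at this

/-- `Tor_i` of the colon by a variable vanishes whenever `Tor_i` does, with the same `i`. Here
`I₀` is generated by the generators not involving `x`. -/
theorem torZero_sdiff_singleton (x : Fin n) {i : ℕ} (h : TorZero P (mIdeal K G) i) :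
    TorZero P (mIdeal K ((· \ {x}) '' G)) i := by
  have h0 : ∀ g ∈ {g ∈ G | x ∉ g}, Disjoint g {x} := fun g hg =>
    Finset.disjoint_singleton_right.2 hg.2
  refine TorZero.colon_of_split P (I₀ := mIdeal K {g ∈ G | x ∉ g}) (x := sqf {x})
    (sqf_smul (Finset.singleton_nonempty x)) ?_ ?_ (fun p => (sqf_mul_mem {x} p).1) ?_ ?_ h
  · exact mIdeal_mono fun g hg => ⟨g \ {x}, ⟨g, hg.1, rfl⟩, Finset.sdiff_subset⟩
  · exact mIdeal_mono fun g hg => ⟨g, hg.1, subset_rfl⟩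
  · intro p hp
    refine Submodule.span_induction ?_ ?_ ?_ ?_ hp
    · rintro _ ⟨g, hg, rfl⟩
      by_cases hx : x ∈ g
      · refine ⟨sqf (g \ {x}), Ideal.subset_span ⟨_, ⟨g, hg, rfl⟩, rfl⟩, ?_⟩
        rw [← sqf_union Finset.disjoint_sdiff,
          Finset.union_sdiff_of_subset (Finset.singleton_subset_iff.2 hx), sub_self]
        exact zero_mem _
      · refine ⟨0, zero_mem _, ?_⟩
        rw [mul_zero, sub_zero]
        exact Ideal.subset_span ⟨g, ⟨hg, hx⟩, rfl⟩
    · exact ⟨0, zero_mem _, by simp⟩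
    · rintro p q _ _ ⟨p', hp', hp⟩ ⟨q', hq', hq⟩
      refine ⟨p' + q', add_mem hp' hq', ?_⟩
      convert add_mem hp hq using 1; ring
    · rintro r p _ ⟨p', hp', hp⟩
      refine ⟨r * p', Ideal.mul_mem_left _ r hp', ?_⟩
      convert Ideal.mul_mem_left _ r hp using 1
      rw [smul_eq_mul]; ring
  · intro p hp
    rwa [← sqf_mul_mem, image_sdiff_of_disjoint h0] at hp

theorem torZero_sdiff (d : Finset (Fin n)) {i : ℕ} (h : TorZero P (mIdeal K G) i) :
    TorZero P (mIdeal K ((· \ d) '' G)) i := by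
  induction d using Finset.induction_on with
  | empty => simpa using h
  | insert x d _ ih =>
    have := torZero_sdiff_singleton P x ih
    rw [Set.image_image] at this
    have e : (fun g : Finset (Fin n) => (g \ d) \ {x}) = (· \ insert x d) := by
      funext g
      rw [sdiff_sdiff, Finset.insert_eq, Finset.union_comm, Finset.sup_eq_union]
    rwa [e] at this

/-- The projective dimension is at most the number of generators. This makes the set of
nonvanishing degrees bounded, so its `sSup` is a genuine maximum. -/
theorem torZero_of_card_lt (r : ℕ) : ∀ G : Finset (Finset (Fin n)), G.card ≤ r → ∀ i, r < i →
    TorZero P (mIdeal K (G : Set (Finset (Fin n)))) i := by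
  induction r with
  | zero =>
    intro G hG i hi
    obtain ⟨i, rfl⟩ := Nat.exists_eq_succ_of_ne_zero hi.ne'
    rw [Finset.card_eq_zero.1 (Nat.le_zero.1 hG), mIdeal]
    simpa using torZero_bot P i
  | succ r ih =>
    intro G hG i hi
    obtain ⟨i, rfl⟩ := Nat.exists_eq_succ_of_ne_zero (Nat.ne_zero_of_lt hi)
    rcases G.eq_empty_or_nonempty with rfl | ⟨f, hf⟩
    · rw [mIdeal]
      simpa using torZero_bot P i
    · have hc : (G.erase f).card ≤ r := by rw [Finset.card_erase_of_mem hf]; omega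
      rw [← Finset.insert_erase hf, Finset.coe_insert]
      refine torZero_insert P (ih _ hc _ (by omega)) ?_
      have := ih ((G.erase f).image (· \ f)) (Finset.card_image_le.trans hc) i (by omega)
      rwa [Finset.coe_image] at this

theorem pdim_eq_of_isGreatest (I : Ideal (MvPolynomial (Fin n) K)) {p : ℕ} (h : ¬ TorZero P I p)
    (h' : ∀ i, p < i → TorZero P I i) : pdim K I = p := by
  rw [pdim]
  refine IsGreatest.csSup_eq ⟨(bettiNumber_ne_zero_iff_s17 P I p).2 h, fun i hi => ?_⟩
  by_contra hlt
  exact (bettiNumber_ne_zero_iff_s17 P I i).1 hi (h' i (not_le.1 hlt))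

theorem pdim_eq_zero (I : Ideal (MvPolynomial (Fin n) K)) (h : ∀ i, TorZero P I i) :
    pdim K I = 0 := by
  rw [pdim]
  have : {i : ℕ | bettiNumber K I i ≠ 0} = ∅ :=
    Set.eq_empty_of_forall_notMem fun i hi => (bettiNumber_ne_zero_iff_s17 P I i).1 hi (h i)
  rw [this, csSup_empty, bot_eq_zero]

/-- The monomial form of the theorem: `a ∪ b`, `b ∪ c` and `a ∪ d` are the supports of `m_{v₁}`,
`m_{v₂}` and `m_J`, and `G` collects the remaining generators. -/
theorem pdim_insert_eq (G : Finset (Finset (Fin n))) {a b c d : Finset (Fin n)}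
    (ha : a.Nonempty) (hb : b.Nonempty) (hc : c.Nonempty)
    (hab : Disjoint a b) (hac : Disjoint a c) (hbc : Disjoint b c)
    (hbd : Disjoint b d) (hcd : Disjoint c d)
    (hGa : ∀ g ∈ G, Disjoint g a) (hGb : ∀ g ∈ G, Disjoint g b) (hGc : ∀ g ∈ G, Disjoint g c) :
    pdim K (mIdeal K (insert (a ∪ d) (insert (a ∪ b) (insert (b ∪ c)
      (G : Set (Finset (Fin n))))))) =
    pdim K (mIdeal K (insert (a ∪ b) (insert (b ∪ c) (G : Set (Finset (Fin n)))))) := by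
  obtain ⟨P⟩ := (inferInstance : HasProjectiveResolution (resField K n)).out
  set H : Set (Finset (Fin n)) := insert (b ∪ c) (G : Set (Finset (Fin n))) with hH
  have hGbc : ∀ g ∈ (G : Set (Finset (Fin n))), Disjoint g (b ∪ c) := fun g hg =>
    Finset.disjoint_union_right.2 ⟨hGb g hg, hGc g hg⟩
  have hGab : ∀ g ∈ (G : Set (Finset (Fin n))), Disjoint g (a ∪ b) := fun g hg =>
    Finset.disjoint_union_right.2 ⟨hGa g hg, hGb g hg⟩
  -- the colon of `G + (bc)` by `ab` is `G + (c)`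
  have e1 : (· \ (a ∪ b)) '' H = insert c (G : Set (Finset (Fin n))) := by
    rw [hH, Set.image_insert_eq, image_sdiff_of_disjoint hGab]
    congr 1
    rw [Finset.disjoint_left] at *
    grind
  -- the colon by `ad` turns `ab` into `b`, which makes `bc` redundant
  have e2 : mIdeal K ((· \ (a ∪ d)) '' insert (a ∪ b) H) =
      mIdeal K (insert b ((· \ d) '' (G : Set (Finset (Fin n))))) := by
    have : (· \ (a ∪ d)) '' (G : Set (Finset (Fin n))) = (· \ d) '' (G : Set (Finset (Fin n))) := by
      refine Set.image_congr fun g hg => ?_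
      have := hGa g hg
      rw [Finset.disjoint_left] at this
      grind
    have h1 : (a ∪ b) \ (a ∪ d) = b := by
      rw [Finset.disjoint_left] at *
      grind
    have h2 : (b ∪ c) \ (a ∪ d) = b ∪ c := by
      rw [Finset.disjoint_left] at *
      grind
    rw [hH, Set.image_insert_eq, Set.image_insert_eq, this, h1, h2]
    apply le_antisymm <;> apply mIdeal_mono
    · rintro g (rfl | rfl | hg)
      · exact ⟨g, Or.inl rfl, subset_rfl⟩
      · exact ⟨b, Or.inl rfl, Finset.subset_union_left⟩
      · exact ⟨g, Or.inr hg, subset_rfl⟩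
    · rintro g (rfl | hg)
      · exact ⟨g, Or.inl rfl, subset_rfl⟩
      · exact ⟨g, Or.inr (Or.inr hg), subset_rfl⟩
  have hGdb : ∀ g ∈ (· \ d) '' (G : Set (Finset (Fin n))), Disjoint g b := by
    rintro _ ⟨g, hg, rfl⟩
    exact (hGb g hg).mono_left Finset.sdiff_subset
  -- the nonvanishing degrees for `G + (ab, bc)` are those for `G`, shifted by 0, 1 and 2
  have up (i : ℕ) (h2 : TorZero P (mIdeal K (G : Set (Finset (Fin n)))) (i + 2))
      (h1 : TorZero P (mIdeal K (G : Set (Finset (Fin n)))) (i + 1))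
      (h0 : TorZero P (mIdeal K (G : Set (Finset (Fin n)))) i) :
      TorZero P (mIdeal K (insert (a ∪ b) H)) (i + 2) := by
    refine torZero_insert P (torZero_free P hGbc h2 h1) ?_
    rw [e1]
    exact torZero_free P hGc h1 h0
  have down (i : ℕ) (h : TorZero P (mIdeal K (insert (a ∪ b) H)) (i + 2)) :
      TorZero P (mIdeal K (G : Set (Finset (Fin n)))) i := by
    have := (torZero_split P ha hab ?_ h).2
    · rw [e1] at this
      exact (torZero_of_free P hc hGc this).2
    · rintro g (rfl | hg)
      · refine ⟨b ∪ c, Or.inl rfl, ?_⟩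
        rw [Finset.disjoint_left] at *
        grind
      · refine ⟨g, Or.inr hg, ?_⟩
        rw [Finset.sdiff_eq_self_of_disjoint (hGab g hg)]
        exact Finset.sdiff_subset
  have colon (i : ℕ) (h1 : TorZero P (mIdeal K (G : Set (Finset (Fin n)))) (i + 1))
      (h0 : TorZero P (mIdeal K (G : Set (Finset (Fin n)))) i) :
      TorZero P (mIdeal K ((· \ (a ∪ d)) '' insert (a ∪ b) H)) (i + 1) := by
    rw [e2]
    exact torZero_free P hGdb (torZero_sdiff P d h1) (torZero_sdiff P d h0)
  -- if everything vanishes, both projective dimensions are `sSup ∅ = 0`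
  by_cases hz : ∀ i, TorZero P (mIdeal K (G : Set (Finset (Fin n)))) i
  · have z (f : Finset (Fin n)) (L : Set (Finset (Fin n)))
        (hL : ∀ i, TorZero P (mIdeal K L) i) (hL' : ∀ i, TorZero P (mIdeal K ((· \ f) '' L)) i) (i : ℕ) :
        TorZero P (mIdeal K (insert f L)) i := by
      rcases i with _ | i
      · exact (hL 0).zero_of_le P (mIdeal_mono fun g hg => ⟨g, Or.inr hg, subset_rfl⟩)
      · exact torZero_insert P (hL _) (hL' _)
    have zH := z (b ∪ c) G hz (torZero_sdiff P _ <| hz ·)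
    have zI := z (a ∪ b) H zH (torZero_sdiff P _ <| zH ·)
    rw [pdim_eq_zero P _ zI, pdim_eq_zero P _ (z (a ∪ d) _ zI (torZero_sdiff P _ <| zI ·))]
  · obtain ⟨p, hp, hmax⟩ : ∃ p, ¬ TorZero P (mIdeal K (G : Set (Finset (Fin n)))) p ∧
        ∀ i, p < i → TorZero P (mIdeal K (G : Set (Finset (Fin n)))) i := by
      classical
      push Not at hz
      have hfin : ∀ i, ¬ TorZero P (mIdeal K (G : Set (Finset (Fin n)))) i → i ≤ G.card :=
        fun i hi => not_lt.1 fun hlt => hi (torZero_of_card_lt P _ G le_rfl i hlt)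
      obtain ⟨j, hj⟩ := hz
      refine ⟨_, Nat.findGreatest_spec (P := fun i => ¬ TorZero P (mIdeal K (G : Set (Finset (Fin n)))) i) (hfin j hj) hj, fun i hi => ?_⟩
      by_contra hi'
      exact absurd (Nat.le_findGreatest (hfin i hi') hi') (not_le.2 hi)
    have b' (i : ℕ) (hi : p + 2 < i) : TorZero P (mIdeal K (insert (a ∪ b) H)) i := by
      obtain ⟨i, rfl⟩ := Nat.exists_eq_add_of_lt hi
      exact up (p + 1 + i) (hmax _ (by omega)) (hmax _ (by omega)) (hmax _ (by omega))
        |> fun h => by convert h using 1; omega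
    have bc (i : ℕ) (hi : p + 1 < i) :
        TorZero P (mIdeal K ((· \ (a ∪ d)) '' insert (a ∪ b) H)) i := by
      obtain ⟨i, rfl⟩ := Nat.exists_eq_succ_of_ne_zero (Nat.ne_zero_of_lt hi)
      exact colon i (hmax _ (by omega)) (hmax _ (by omega))
    -- both ideals have top nonvanishing degree `p + 2`
    rw [pdim_eq_of_isGreatest P _ (p := p + 2) (fun h => hp (down p h)) b']
    refine pdim_eq_of_isGreatest P _ (fun h => hp (down p ?_)) fun i hi => ?_
    · exact torZero_of_insert P (bc _ (by omega)) h
    · obtain ⟨i, rfl⟩ := Nat.exists_eq_succ_of_ne_zero (Nat.ne_zero_of_lt hi)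
      exact torZero_insert P (b' _ hi) (bc _ (by omega))
end Monomial

/-! ### Edges along the branch -/

section Combinatorics
variable {n μ : ℕ} {m : Fin μ → Finset (Fin n)}

/-- The set of vertices `j` such that the variable `i` divides `m_j`; it is an edge when nonempty. -/
def edgeOf (m : Fin μ → Finset (Fin n)) (i : Fin n) : Finset (Fin μ) :=
  Finset.univ.filter (fun j => i ∈ m j)

theorem mem_edgeOf {i : Fin n} {j : Fin μ} : j ∈ edgeOf m i ↔ i ∈ m j := by simp [edgeOf]

theorem edgeOf_mem {i : Fin n} {j : Fin μ} (h : i ∈ m j) : edgeOf m i ∈ hgEdges m :=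
  ⟨⟨j, mem_edgeOf.2 h⟩, i, rfl⟩

theorem exists_edgeOf {F : Finset (Fin μ)} (hF : F ∈ hgEdges m) : ∃ i, F = edgeOf m i := hF.2

/-- Every edge through an open vertex of degree 2 lying in no large edge is one of its two
neighbouring edges. -/
theorem edge_of_open {J v₁ v₂ : Fin μ} (n01 : J ≠ v₁) (n02 : J ≠ v₂)
    (e01 : ({J, v₁} : Finset (Fin μ)) ∈ hgEdges m) (e12 : ({v₁, v₂} : Finset (Fin μ)) ∈ hgEdges m)
    (n12 : v₁ ≠ v₂) (hd : hgDeg (hgEdges m) v₁ = 2) (hopen : ({v₁} : Finset (Fin μ)) ∉ hgEdges m)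
    (hbig : ∀ F ∈ hgEdges m, v₁ ∈ F → F.card ≤ 2) {i : Fin n} (hi : i ∈ m v₁) :
    edgeOf m i = {J, v₁} ∨ edgeOf m i = {v₁, v₂} := by
  have hE := edgeOf_mem hi
  have hv : v₁ ∈ edgeOf m i := mem_edgeOf.2 hi
  have hc1 : (edgeOf m i).card ≠ 1 := by
    intro h
    obtain ⟨w, hw⟩ := Finset.card_eq_one.1 h
    rw [hw, Finset.mem_singleton] at hv
    subst hv
    exact hopen (hw ▸ hE)
  have hc : (edgeOf m i).card = 2 := by
    have := hbig _ hE hv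
    have := Finset.card_pos.2 ⟨_, hv⟩
    omega
  have hne : ({J, v₁} : Finset (Fin μ)) ≠ {v₁, v₂} := fun h => by
    have : J ∈ ({v₁, v₂} : Finset (Fin μ)) := h ▸ Finset.mem_insert_self _ _
    simp [n01, n02] at this
  have hsub : ({{J, v₁}, {v₁, v₂}} : Set (Finset (Fin μ))) ⊆
      {F | F ∈ hgEdges m ∧ F.card = 2 ∧ v₁ ∈ F} := by
    rintro F (rfl | rfl)
    · exact ⟨e01, Finset.card_pair n01, by simp⟩
    · exact ⟨e12, Finset.card_pair n12, by simp⟩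
  have heq := Set.eq_of_subset_of_ncard_le hsub
    (by rw [Set.ncard_pair hne]; exact hd.le) (Set.toFinite _)
  have : edgeOf m i ∈ ({{J, v₁}, {v₁, v₂}} : Set (Finset (Fin μ))) := heq ▸ ⟨hE, hc, hv⟩
  simpa using this

/-- Every edge through a vertex of degree 1 lying in no large edge is the singleton or the unique
2-element edge. -/
theorem edge_of_leaf {v₁ v₂ : Fin μ} (e12 : ({v₁, v₂} : Finset (Fin μ)) ∈ hgEdges m)
    (n12 : v₁ ≠ v₂) (hd : hgDeg (hgEdges m) v₂ = 1)
    (hbig : ∀ F ∈ hgEdges m, v₂ ∈ F → F.card ≤ 2) {i : Fin n} (hi : i ∈ m v₂) :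
    edgeOf m i = {v₂} ∨ edgeOf m i = {v₁, v₂} := by
  have hE := edgeOf_mem hi
  have hv : v₂ ∈ edgeOf m i := mem_edgeOf.2 hi
  by_cases h : (edgeOf m i).card = 1
  · obtain ⟨w, hw⟩ := Finset.card_eq_one.1 h
    rw [hw, Finset.mem_singleton] at hv
    exact Or.inl (hv ▸ hw)
  · have hc : (edgeOf m i).card = 2 := by
      have := hbig _ hE hv
      have := Finset.card_pos.2 ⟨_, hv⟩
      omega
    obtain ⟨F, hF⟩ := Set.ncard_eq_one.1 hd
    have h1 : edgeOf m i ∈ ({F} : Set (Finset (Fin μ))) := hF ▸ ⟨hE, hc, hv⟩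
    have h2 : ({v₁, v₂} : Finset (Fin μ)) ∈ ({F} : Set (Finset (Fin μ))) :=
      hF ▸ ⟨e12, Finset.card_pair n12, by simp⟩
    exact Or.inr (h1.trans h2.symm)
end Combinatorics

/-- Let `I` be a square-free monomial ideal in `R = K[x₁,…,xₙ]` with
minimal generators `m₁,…,m_μ` (encoded by nonempty supports forming an antichain) and
separated hypergraph `H = H(I)`.  Let `J` be a joint of `H` such that no edge of `H` of
cardinality at least `3` contains a vertex lying on some branch departing from `J`, and
suppose there is a branch `J, v₁, v₂` of length `2` departing from `J` in which `v₁` is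
open (`{v₁} ∉ H`) and `v₂` is closed (`{v₂} ∈ H`).  Then `pd(R/I) = pd(R/I')`, where
`I'` is the ideal generated by the minimal generators of `I` other than `m_J`. -/
theorem stmt17 (K : Type) [Field K] (n μ : ℕ) (hμ : 1 ≤ μ)
    (m : Fin μ → Finset (Fin n))
    (hne : ∀ j, (m j).Nonempty)
    (hmin : ∀ j k, j ≠ k → ¬ m j ⊆ m k)
    (hsep : SeparatedHG m)
    (J : Fin μ) (hJ : IsJoint (hgEdges m) J)
    (hNoBigOnBranches : ∀ F ∈ hgEdges m, 3 ≤ F.card → ∀ x ∈ F,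
      ¬ ∃ (k : ℕ) (v : Fin (k + 1) → Fin μ),
        IsBranchFrom (hgEdges m) J k v ∧ ∃ l : Fin (k + 1), v l = x)
    (hBranch2 : ∃ v : Fin 3 → Fin μ, IsBranchFrom (hgEdges m) J 2 v ∧
      ({v 1} : Finset (Fin μ)) ∉ hgEdges m ∧ ({v 2} : Finset (Fin μ)) ∈ hgEdges m) :
    pdim K (sqIdeal K m) =
      pdim K (Ideal.span ((fun j => sqMonomial K m j) '' {j : Fin μ | j ≠ J})) := by
  obtain ⟨v, ⟨-, hinj, hv0, hedge, hdeg, hlast⟩, hopen, hclosed⟩ := hBranch2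
  have hNoBig : ∀ l : Fin 3, ∀ F ∈ hgEdges m, v l ∈ F → F.card ≤ 2 := by
    intro l F hF hl
    by_contra hc
    exact hNoBigOnBranches F hF (by omega) (v l) hl
      ⟨2, v, ⟨by norm_num, hinj, hv0, hedge, hdeg, hlast⟩, l, rfl⟩
  have e01 : ({v 0, v 1} : Finset (Fin μ)) ∈ hgEdges m := hedge 0
  have e12 : ({v 1, v 2} : Finset (Fin μ)) ∈ hgEdges m := hedge 1
  have hd1 : hgDeg (hgEdges m) (v 1) = 2 := hdeg 1 (by norm_num) (by norm_num)
  have hd2 : hgDeg (hgEdges m) (v 2) = 1 := hlast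
  have n01 : v 0 ≠ v 1 := hinj.ne (by decide)
  have n02 : v 0 ≠ v 2 := hinj.ne (by decide)
  have n12 : v 1 ≠ v 2 := hinj.ne (by decide)
  rw [hv0] at e01 n01 n02
  have hE1 := fun i => edge_of_open (i := i) n01 n02 e01 e12 n12 hd1 hopen (hNoBig 1)
  have hE2 := fun i => edge_of_leaf (i := i) e12 n12 hd2 (hNoBig 2)
  obtain ⟨i01, h01⟩ := exists_edgeOf e01
  obtain ⟨i12, h12⟩ := exists_edgeOf e12
  obtain ⟨i2, h2⟩ := exists_edgeOf hclosed
  generalize v 1 = v₁ at *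
  generalize v 2 = v₂ at *
  -- which generators are divisible by a given variable of `m v₁`, resp. `m v₂`
  have k1 : ∀ i ∈ m v₁, (∀ j, i ∈ m j ↔ j = J ∨ j = v₁) ∨ (∀ j, i ∈ m j ↔ j = v₁ ∨ j = v₂) := by
    intro i hi
    refine (hE1 i hi).imp (fun h j => ?_) (fun h j => ?_) <;> rw [← mem_edgeOf, h] <;> simp
  have k2 : ∀ i ∈ m v₂, (∀ j, i ∈ m j ↔ j = v₂) ∨ (∀ j, i ∈ m j ↔ j = v₁ ∨ j = v₂) := by
    intro i hi
    refine (hE2 i hi).imp (fun h j => ?_) (fun h j => ?_) <;> rw [← mem_edgeOf, h] <;> simp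
  have l01 : ∀ j, i01 ∈ m j ↔ j = J ∨ j = v₁ := fun j => by rw [← mem_edgeOf, ← h01]; simp
  have l12 : ∀ j, i12 ∈ m j ↔ j = v₁ ∨ j = v₂ := fun j => by rw [← mem_edgeOf, ← h12]; simp
  have l2 : ∀ j, i2 ∈ m j ↔ j = v₂ := fun j => by rw [← mem_edgeOf, ← h2]; simp
  let G : Finset (Finset (Fin n)) :=
    (Finset.univ.filter fun j => j ≠ J ∧ j ≠ v₁ ∧ j ≠ v₂).image m
  have hG : ∀ g ∈ G, ∃ j, (j ≠ J ∧ j ≠ v₁ ∧ j ≠ v₂) ∧ m j = g := by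
    intro g hg
    simpa [G] using hg
  have main := pdim_insert_eq (K := K) G (a := m v₁ ∩ m J) (b := m v₁ ∩ m v₂)
    (c := m v₂ \ m v₁) (d := m J \ m v₁)
    ⟨i01, by simp [l01]⟩ ⟨i12, by simp [l12]⟩ ⟨i2, by simp [l2, n12]⟩
    (by rw [Finset.disjoint_left]; grind) (by rw [Finset.disjoint_left]; grind)
    (by rw [Finset.disjoint_left]; grind) (by rw [Finset.disjoint_left]; grind)
    (by rw [Finset.disjoint_left]; grind)
    (by
      intro g hg
      obtain ⟨j, hj, rfl⟩ := hG g hg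
      rw [Finset.disjoint_left]; grind)
    (by
      intro g hg
      obtain ⟨j, hj, rfl⟩ := hG g hg
      rw [Finset.disjoint_left]; grind)
    (by
      intro g hg
      obtain ⟨j, hj, rfl⟩ := hG g hg
      rw [Finset.disjoint_left]; grind)
  have m0 : m v₁ ∩ m J ∪ m J \ m v₁ = m J := by grind
  have m1 : m v₁ ∩ m J ∪ m v₁ ∩ m v₂ = m v₁ := by grind
  have m2 : m v₁ ∩ m v₂ ∪ m v₂ \ m v₁ = m v₂ := by grind
  rw [m0, m1, m2] at main
  have s1 : insert (m v₁) (insert (m v₂) (G : Set (Finset (Fin n)))) = m '' {j | j ≠ J} := by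
    ext g
    simp only [G, Finset.coe_image, Set.mem_insert_iff, Set.mem_image, Finset.coe_filter,
      Finset.mem_univ, true_and, Set.mem_ofPred_eq]
    constructor
    · rintro (rfl | rfl | ⟨j, hj, rfl⟩)
      · exact ⟨_, n01.symm, rfl⟩
      · exact ⟨_, n02.symm, rfl⟩
      · exact ⟨j, hj.1, rfl⟩
    · rintro ⟨j, hj, rfl⟩
      by_cases hj1 : j = v₁
      · exact Or.inl (hj1 ▸ rfl)
      · by_cases hj2 : j = v₂
        · exact Or.inr (Or.inl (hj2 ▸ rfl))
        · exact Or.inr (Or.inr ⟨j, ⟨hj, hj1, hj2⟩, rfl⟩)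
  have s0 : insert (m J) (m '' {j | j ≠ J}) = Set.range m := by
    rw [← Set.image_insert_eq, ← Set.image_univ]
    congr 1
    ext j
    simp [em]
  rw [s1, s0] at main
  have t0 : sqIdeal K m = mIdeal K (Set.range m) := by
    rw [mIdeal, ← Set.range_comp]; rfl
  have t1 : Ideal.span ((fun j => sqMonomial K m j) '' {j : Fin μ | j ≠ J}) =
      mIdeal K (m '' {j | j ≠ J}) := by
    rw [mIdeal, Set.image_image]; rfl
  rw [t0, t1, main]
end
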